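/- Fix an integer p ≥ 2 and real numbers α, β with 0 ≤ α ≤ β ≤ p−1. Then the Hausdorff dimension of the Banach set B(α,β) = {x ∈ [0,1] : M̲(x) = α and M̄(x) = β} equals sup_{α ≤ t ≤ β} h(t), where h is the p-adic entropy function. -/

import Mathlib

open Filter MeasureTheory Set
open scoped ENNReal

noncomputable section

/-- Number of words of length `n` over the alphabet `{0, …, p-1}` whose digit sum lies
strictly between `n(α-δ)` and `n(α+δ)`; this is `h(α,n,δ)`. -/
def hcount (p n : ℕ) (α δ : ℝ) : ℕ :=
  Nat.card {w : Fin n → Fin p //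
    (n : ℝ) * (α - δ) < ∑ i, ((w i : ℕ) : ℝ) ∧ (∑ i, ((w i : ℕ) : ℝ)) < n * (α + δ)}

/-- The `p`-adic entropy function
`h(α) = lim_{δ→0} limsup_{n→∞} log h(α,n,δ) / (n log p)`.
Since the inner quantity is nondecreasing in `δ`, the limit as `δ → 0⁺` equals the
infimum over `δ > 0`. -/
def entropy (p : ℕ) (α : ℝ) : ℝ :=
  ⨅ δ : {δ : ℝ // 0 < δ},
    limsup (fun n : ℕ => Real.log (hcount p n α δ) / (n * Real.log p)) atTop

/-- Number of words of length `n` over `{0, …, p-1}` with digit sum `< n(α+δ)`;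
this is `h̄(α,n,δ)`. -/
def hbarCount (p n : ℕ) (α δ : ℝ) : ℕ :=
  Nat.card {w : Fin n → Fin p // (∑ i, ((w i : ℕ) : ℝ)) < n * (α + δ)}

/-- The `p`-adic upper entropy function
`h̄(α) = lim_{δ→0} limsup_{n→∞} log h̄(α,n,δ) / (n log p)`, the limit in `δ`
being the infimum over `δ > 0` by monotonicity in `δ`. -/
def upperEntropy (p : ℕ) (α : ℝ) : ℝ :=
  ⨅ δ : {δ : ℝ // 0 < δ},
    limsup (fun n : ℕ => Real.log (hbarCount p n α δ) / (n * Real.log p)) atTop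

/-- Number of words of length `n` over `{0, …, p-1}` with digit sum `> n(α-δ)`;
this is `h̲(α,n,δ)`. -/
def hlowCount (p n : ℕ) (α δ : ℝ) : ℕ :=
  Nat.card {w : Fin n → Fin p // (n : ℝ) * (α - δ) < ∑ i, ((w i : ℕ) : ℝ)}

/-- The `p`-adic lower entropy function
`h̲(α) = lim_{δ→0} liminf_{n→∞} log h̲(α,n,δ) / (n log p)`, the limit in `δ`
being the infimum over `δ > 0` by monotonicity in `δ`. -/
def lowerEntropy (p : ℕ) (α : ℝ) : ℝ :=
  ⨅ δ : {δ : ℝ // 0 < δ},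
    liminf (fun n : ℕ => Real.log (hlowCount p n α δ) / (n * Real.log p)) atTop

/-- The `(n+1)`-th digit `x_{n+1} ∈ {0,…,p-1}` of the non-terminating `p`-adic expansion
`x = 0.x₁x₂x₃…` of `x ∈ [0,1]` (the expansion not ending in all zeros). -/
def padicDigit (p : ℕ) (x : ℝ) (n : ℕ) : ℤ :=
  (⌈x * p ^ (n + 1)⌉ - 1) - p * (⌈x * p ^ n⌉ - 1)

/-- `S_n(T^m x) = x_{m+1} + ⋯ + x_{m+n}`, the digit sum of length `n` after shifting
`m` times. In particular `msum p x 0 n = S_n(x)`. -/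
def msum (p : ℕ) (x : ℝ) (m n : ℕ) : ℤ :=
  ∑ i ∈ Finset.range n, padicDigit p x (m + i)

/-- The `n`-th lower moving digit mean `M̲ₙ(x) = liminf_{m→∞} S_n(T^m x)/n`. -/
def lowerMn (p : ℕ) (x : ℝ) (n : ℕ) : ℝ :=
  liminf (fun m : ℕ => (msum p x m n : ℝ) / n) atTop

/-- The `n`-th upper moving digit mean `M̄ₙ(x) = limsup_{m→∞} S_n(T^m x)/n`. -/
def upperMn (p : ℕ) (x : ℝ) (n : ℕ) : ℝ :=
  limsup (fun m : ℕ => (msum p x m n : ℝ) / n) atTop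

/-- The lower moving digit mean `M̲(x) = lim_{n→∞} M̲ₙ(x)`; the limit exists by
subadditivity, hence equals the `liminf`. -/
def lowerM (p : ℕ) (x : ℝ) : ℝ := liminf (fun n : ℕ => lowerMn p x n) atTop

/-- The upper moving digit mean `M̄(x) = lim_{n→∞} M̄ₙ(x)`; the limit exists by
subadditivity, hence equals the `limsup`. -/
def upperM (p : ℕ) (x : ℝ) : ℝ := limsup (fun n : ℕ => upperMn p x n) atTop

/-- The lower digit mean `A̲(x) = liminf_{n→∞} S_n(x)/n`. -/
def lowerA (p : ℕ) (x : ℝ) : ℝ := liminf (fun n : ℕ => (msum p x 0 n : ℝ) / n) atTop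

/-- The upper digit mean `Ā(x) = limsup_{n→∞} S_n(x)/n`. -/
def upperA (p : ℕ) (x : ℝ) : ℝ := limsup (fun n : ℕ => (msum p x 0 n : ℝ) / n) atTop

/-- The Banach set `B(α,β) = {x ∈ [0,1] : M̲(x) = α, M̄(x) = β}`. -/
def BanachSet (p : ℕ) (α β : ℝ) : Set ℝ :=
  {x | x ∈ Icc (0 : ℝ) 1 ∧ lowerM p x = α ∧ upperM p x = β}

/-!
Upper bound. By compactness of `[α, β]` there is a neighbourhood `U` of it such that, for all large
`n`, at most `p ^ (n (sup h + ε))` words of length `n` have digit mean in `U`. If `x ∈ B(α, β)`,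
then for some such `n` all words `x_{m+1}⋯x_{m+n}` with `m` large are of this kind, so `B(α, β)` is
a countable union of sets covered by few `p`-adic intervals at arbitrarily small scales.

Lower bound. Let `0 < γ < h(t)`, which forces `0 < t < p - 1` because the entropy vanishes at the
extreme means. For a suitable `N` there are at least `p ^ (Nγ)` words of length `N` with any
prescribed digit sum close to `Nt`. Concatenate such words freely, except that on the sparse block
runs `[2 ^ k, 2 ^ k + k)` the block sums follow `Nα` (`k` even) or `Nβ` (`k` odd) instead. Rounding
the target sums so that their errors do not accumulate keeps every digit sum within `O(1)` of its
target, which puts the resulting points in `B(α, β)`. The runs have density zero, so reading off the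
choices in the free blocks is Hölder of exponent arbitrarily close to `γ` and maps onto an interval.
-/

open scoped NNReal Topology

lemma liminf_mem_Icc {ι R : Type*} [ConditionallyCompleteLinearOrder R] {l : Filter ι}
    {u : ι → R} {a b : R} (ha : ∀ᶠ i in l, a ≤ u i) (hb : ∃ᶠ i in l, u i ≤ b) :
    liminf u l ∈ Icc a b :=
  ⟨le_liminf_of_le (IsCobounded.of_frequently_le hb) ha,
    liminf_le_of_frequently_le hb (isBoundedUnder_of_eventually_ge ha)⟩

lemma limsup_mem_Icc {ι R : Type*} [ConditionallyCompleteLinearOrder R] {l : Filter ι}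
    {u : ι → R} {a b : R} (ha : ∃ᶠ i in l, a ≤ u i) (hb : ∀ᶠ i in l, u i ≤ b) :
    limsup u l ∈ Icc a b :=
  ⟨le_limsup_of_frequently_le ha (isBoundedUnder_of_eventually_le hb),
    limsup_le_of_le (IsCobounded.of_frequently_ge ha) hb⟩

lemma exists_Ioo_subset_of_mem_nhdsSet_Icc {X : Type*} [LinearOrder X] [TopologicalSpace X]
    [OrderTopology X] [NoMinOrder X] [NoMaxOrder X] {α β : X} (h : α ≤ β) {U : Set X}
    (hU : U ∈ 𝓝ˢ (Icc α β)) : ∃ a < α, ∃ b > β, Ioo a b ⊆ U := by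
  rw [nhdsSet_Icc h, mem_sup, mem_sup, mem_principal] at hU
  obtain ⟨⟨hα, hβ⟩, hmid⟩ := hU
  obtain ⟨a, c, ⟨ha, hc⟩, hac⟩ := mem_nhds_iff_exists_Ioo_subset.1 hα
  obtain ⟨d, b, ⟨hd, hb⟩, hdb⟩ := mem_nhds_iff_exists_Ioo_subset.1 hβ
  refine ⟨a, ha, b, hb, fun x hx => ?_⟩
  rcases le_or_gt x α with hxα | hxα
  · exact hac ⟨hx.1, hxα.trans_lt hc⟩
  rcases le_or_gt β x with hxβ | hxβ
  · exact hdb ⟨hd.trans_le hxβ, hx.2⟩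
  · exact hmid ⟨hxα, hxβ⟩

lemma dimH_le_of_forall_cover {X : Type*} [EMetricSpace X] {E : Set X} {d : ℝ≥0} {C : ℝ≥0∞}
    (hC : C ≠ ⊤) {r : ℕ → ℝ≥0∞} (hr : Tendsto r atTop (𝓝 0)) {ι : ℕ → Type*}
    [∀ k, Fintype (ι k)] (cell : ∀ k, ι k → Set X) (hE : ∀ k, E ⊆ ⋃ i, cell k i)
    (hdiam : ∀ k i, Metric.ediam (cell k i) ≤ r k)
    (hcard : ∀ k, Fintype.card (ι k) * r k ^ (d : ℝ) ≤ C) : dimH E ≤ d := by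
  borelize X
  have hsum (k : ℕ) : ∑ i, Metric.ediam (cell k i) ^ (d : ℝ) ≤ C :=
    calc ∑ i, Metric.ediam (cell k i) ^ (d : ℝ)
        ≤ ∑ _i : ι k, r k ^ (d : ℝ) :=
          Finset.sum_le_sum fun i _ => ENNReal.rpow_le_rpow (hdiam k i) d.2
      _ = Fintype.card (ι k) * r k ^ (d : ℝ) := by simp
      _ ≤ C := hcard k
  refine dimH_le_of_hausdorffMeasure_ne_top (ne_top_of_le_ne_top hC ?_)
  calc Measure.hausdorffMeasure (d : ℝ) E
      ≤ liminf (fun k => ∑ i, Metric.ediam (cell k i) ^ (d : ℝ)) atTop :=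
        Measure.hausdorffMeasure_le_liminf_sum _ E r hr cell (.of_forall hdiam) (.of_forall hE)
    _ ≤ liminf (fun _ : ℕ => C) atTop := liminf_le_liminf (.of_forall hsum)
    _ = C := liminf_const C

lemma dimH_range_le_of_edist_le {ι X Y : Type*} [EMetricSpace X] [EMetricSpace Y]
    {f : ι → X} {g : ι → Y} {C ρ : ℝ≥0} (hρ : 0 < ρ)
    (h : ∀ a b, edist (g a) (g b) ≤ C * edist (f a) (f b) ^ (ρ : ℝ)) :
    dimH (range g) ≤ dimH (range f) / ρ := by
  rcases isEmpty_or_nonempty ι with hι | hι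
  · simp [range_eq_empty g]
  have hfactor (a : ι) : g (Function.invFun f (f a)) = g a := by
    have hfa : f (Function.invFun f (f a)) = f a := Function.invFun_eq ⟨a, rfl⟩
    simpa [hfa, hρ] using h (Function.invFun f (f a)) a
  have hholder : HolderOnWith C ρ (g ∘ Function.invFun f) (range f) := by
    rintro _ ⟨a, rfl⟩ _ ⟨b, rfl⟩
    simpa [hfactor] using h a b
  have himage : (g ∘ Function.invFun f) '' range f = range g := by
    rw [← range_comp]
    exact congrArg range (funext hfactor)
  exact himage ▸ hholder.dimH_image_le hρ

lemma abs_sum_range_le_of_abs_sum_range_mul_le {f : ℕ → ℝ} {N : ℕ} (hN : 0 < N) {B C : ℝ}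
    (hf : ∀ i, |f i| ≤ B) (hblock : ∀ j, |∑ i ∈ Finset.range (j * N), f i| ≤ C) (k : ℕ) :
    |∑ i ∈ Finset.range k, f i| ≤ C + N * B := by
  have hrest : |∑ i ∈ Finset.range (k % N), f (k / N * N + i)| ≤ N * B :=
    calc |∑ i ∈ Finset.range (k % N), f (k / N * N + i)|
        ≤ ∑ i ∈ Finset.range (k % N), |f (k / N * N + i)| := Finset.abs_sum_le_sum_abs _ _
      _ ≤ (k % N : ℕ) * B := by
        simpa using Finset.sum_le_card_nsmul (Finset.range (k % N)) _ B fun i _ => hf _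
      _ ≤ N * B := by
        have := (abs_nonneg _).trans (hf 0)
        have := (Nat.mod_lt k hN).le
        gcongr
  calc |∑ i ∈ Finset.range k, f i|
      = |∑ i ∈ Finset.range (k / N * N), f i + ∑ i ∈ Finset.range (k % N), f (k / N * N + i)| := by
        rw [← Finset.sum_range_add, Nat.div_add_mod']
    _ ≤ C + N * B := (abs_add_le _ _).trans (add_le_add (hblock _) hrest)

/-- The integers obtained from a real sequence by rounding its partial sums down: their own partial
sums stay within `1` of those of `a`. -/
def floorIncrement (a : ℕ → ℝ) (j : ℕ) : ℕ :=
  ⌊∑ i ∈ Finset.range (j + 1), a i⌋₊ - ⌊∑ i ∈ Finset.range j, a i⌋₊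

section floorIncrement

variable {a : ℕ → ℝ}

lemma floor_sum_range_mono (ha : ∀ i, 0 ≤ a i) :
    Monotone fun j => ⌊∑ i ∈ Finset.range j, a i⌋₊ :=
  Nat.floor_mono.comp ((Finset.sum_mono_set_of_nonneg ha).comp Finset.range_mono)

lemma sum_floorIncrement (ha : ∀ i, 0 ≤ a i) (j : ℕ) :
    ∑ i ∈ Finset.range j, floorIncrement a i = ⌊∑ i ∈ Finset.range j, a i⌋₊ := by
  simpa [floorIncrement] using Finset.sum_range_tsub (floor_sum_range_mono ha) j

lemma abs_floorIncrement_sub_lt (ha : ∀ i, 0 ≤ a i) (j : ℕ) :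
    |(floorIncrement a j : ℝ) - a j| < 1 := by
  have hfloor (k : ℕ) := Nat.floor_le (Finset.sum_nonneg fun i (_ : i ∈ Finset.range k) => ha i)
  have hceil (k : ℕ) := Nat.lt_floor_add_one (∑ i ∈ Finset.range k, a i)
  rw [floorIncrement, Nat.cast_sub (floor_sum_range_mono ha j.le_succ), abs_lt]
  have hsucc := Finset.sum_range_succ a j
  constructor <;> linarith [hfloor j, hfloor (j + 1), hceil j, hceil (j + 1)]

end floorIncrement

/-! ### Digits and words -/

/-- The integer `x₁x₂⋯x_K` written by the first `K` digits of the non-terminating expansion of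
`x`. -/
def padicPrefix (p : ℕ) (x : ℝ) (K : ℕ) : ℤ := ⌈x * p ^ K⌉ - 1

lemma padicPrefix_succ (p : ℕ) (x : ℝ) (K : ℕ) :
    padicPrefix p x (K + 1) = p * padicPrefix p x K + padicDigit p x K := by
  simp [padicPrefix, padicDigit]

lemma padicPrefix_lt (p : ℕ) (x : ℝ) (K : ℕ) : (padicPrefix p x K : ℝ) < x * p ^ K := by
  have := Int.ceil_lt_add_one (x * (p : ℝ) ^ K)
  rw [padicPrefix]
  push_cast
  linarith

lemma le_padicPrefix_add_one (p : ℕ) (x : ℝ) (K : ℕ) : x * p ^ K ≤ padicPrefix p x K + 1 := by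
  simpa [padicPrefix] using Int.le_ceil (x * (p : ℝ) ^ K)

lemma padicPrefix_mem_Icc {p : ℕ} (hp : 0 < p) {x : ℝ} (hx : x ∈ Icc (0 : ℝ) 1) (K : ℕ) :
    padicPrefix p x K ∈ Finset.Icc (-1 : ℤ) (p ^ K - 1) := by
  have hpK : (0 : ℝ) < (p : ℝ) ^ K := by positivity
  have hle : ⌈x * (p : ℝ) ^ K⌉ ≤ (p : ℤ) ^ K := by
    refine Int.ceil_le.2 ?_
    push_cast
    exact mul_le_of_le_one_left hpK.le hx.2
  have hnonneg : 0 ≤ ⌈x * (p : ℝ) ^ K⌉ := Int.ceil_nonneg (mul_nonneg hx.1 hpK.le)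
  rw [Finset.mem_Icc, padicPrefix]
  omega

lemma padicDigit_nonneg {p : ℕ} (hp : 0 < p) (x : ℝ) (n : ℕ) : 0 ≤ padicDigit p x n := by
  have hp' : (0 : ℝ) < p := by exact_mod_cast hp
  have hlt : ((p * padicPrefix p x n : ℤ) : ℝ) < x * p ^ (n + 1) := by
    push_cast
    rw [pow_succ, ← mul_assoc, mul_comm (p : ℝ)]
    exact mul_lt_mul_of_pos_right (padicPrefix_lt p x n) hp'
  have hle : p * padicPrefix p x n ≤ padicPrefix p x (n + 1) :=
    Int.le_sub_one_of_lt (Int.lt_ceil.2 hlt)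
  linarith [padicPrefix_succ p x n]

lemma padicDigit_lt (p : ℕ) (x : ℝ) (n : ℕ) : padicDigit p x n < p := by
  have hle : x * p ^ (n + 1) ≤ ((p * (padicPrefix p x n + 1) : ℤ) : ℝ) := by
    push_cast
    rw [pow_succ, ← mul_assoc, mul_comm (p : ℝ)]
    exact mul_le_mul_of_nonneg_right (le_padicPrefix_add_one p x n) p.cast_nonneg
  have hlt : padicPrefix p x (n + 1) < p * (padicPrefix p x n + 1) :=
    Int.sub_one_lt_of_le (Int.ceil_le.2 hle)
  linarith [padicPrefix_succ p x n]

lemma padicPrefix_add_congr {p : ℕ} {x y : ℝ} {m n : ℕ}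
    (hm : padicPrefix p x m = padicPrefix p y m)
    (hn : ∀ i < n, padicDigit p x (m + i) = padicDigit p y (m + i)) :
    padicPrefix p x (m + n) = padicPrefix p y (m + n) := by
  induction n with
  | zero => exact hm
  | succ n ih =>
    rw [← add_assoc, padicPrefix_succ, padicPrefix_succ, hn n n.lt_succ_self,
      ih fun i hi => hn i (hi.trans n.lt_succ_self)]

lemma abs_sub_le_of_padicPrefix_eq {p : ℕ} (hp : 0 < p) {x y : ℝ} {K : ℕ}
    (h : padicPrefix p x K = padicPrefix p y K) : |x - y| ≤ ((p : ℝ) ^ K)⁻¹ := by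
  have hpK : (0 : ℝ) < (p : ℝ) ^ K := by positivity
  have hx := padicPrefix_lt p x K
  have hx' := le_padicPrefix_add_one p x K
  rw [h] at hx hx'
  rw [← one_div, le_div_iff₀ hpK, ← abs_of_pos hpK, ← abs_mul, sub_mul, abs_le]
  constructor <;> linarith [padicPrefix_lt p y K, le_padicPrefix_add_one p y K]

/-- The word `x_{m+1}⋯x_{m+n}` of digits of `x`. -/
def digitWord (p : ℕ) [NeZero p] (x : ℝ) (m n : ℕ) (i : Fin n) : Fin p :=
  Fin.ofNat p (padicDigit p x (m + i)).toNat

lemma coe_digitWord (p : ℕ) [NeZero p] (x : ℝ) (m : ℕ) {n : ℕ} (i : Fin n) :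
    ((digitWord p x m n i : ℕ) : ℤ) = padicDigit p x (m + i) := by
  have hnonneg := padicDigit_nonneg (NeZero.pos p) x (m + i)
  have hlt := padicDigit_lt p x (m + i)
  rw [digitWord, Fin.val_ofNat, Nat.mod_eq_of_lt (by omega), Int.toNat_of_nonneg hnonneg]

lemma padicPrefix_add_congr_digitWord {p : ℕ} [NeZero p] {x y : ℝ} {m n : ℕ}
    (hm : padicPrefix p x m = padicPrefix p y m) (hn : digitWord p x m n = digitWord p y m n) :
    padicPrefix p x (m + n) = padicPrefix p y (m + n) :=
  padicPrefix_add_congr hm fun i hi => by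
    simpa [coe_digitWord] using congrArg (fun w => ((w ⟨i, hi⟩ : ℕ) : ℤ)) hn

/-- The mean `(w₁ + ⋯ + w_n) / n` of the digits of a word, with value `0` on the empty word. -/
def wordMean {p n : ℕ} (w : Fin n → Fin p) : ℝ := (∑ i, ((w i : ℕ) : ℝ)) / n

lemma wordMean_mem_Icc {p n : ℕ} (w : Fin n → Fin p) : wordMean w ∈ Icc (0 : ℝ) p := by
  refine ⟨by unfold wordMean; positivity, div_le_of_le_mul₀ n.cast_nonneg p.cast_nonneg ?_⟩
  rw [mul_comm]
  simpa using Finset.sum_le_card_nsmul Finset.univ (fun i => ((w i : ℕ) : ℝ)) p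
    fun i _ => by exact_mod_cast (w i).is_lt.le

lemma msum_div_eq_wordMean (p : ℕ) [NeZero p] (x : ℝ) (m n : ℕ) :
    (msum p x m n : ℝ) / n = wordMean (digitWord p x m n) := by
  rw [wordMean, msum, Finset.sum_range]
  push_cast [← coe_digitWord]
  rfl

open scoped Classical in
/-- The words of length `n` over `{0, …, p-1}` whose digit mean lies in `s`. -/
def meanWords (p n : ℕ) (s : Set ℝ) : Finset (Fin n → Fin p) :=
  Finset.univ.filter fun w => wordMean w ∈ s

lemma mem_meanWords {p n : ℕ} {s : Set ℝ} {w : Fin n → Fin p} :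
    w ∈ meanWords p n s ↔ wordMean w ∈ s := by
  simp [meanWords]

lemma card_meanWords_union_le (p n : ℕ) (s t : Set ℝ) :
    (meanWords p n (s ∪ t)).card ≤ (meanWords p n s).card + (meanWords p n t).card := by
  classical
  refine (Finset.card_le_card fun w hw => ?_).trans (Finset.card_union_le _ _)
  simpa [mem_meanWords] using hw

lemma mem_meanWords_Ioo {p n : ℕ} (hn : 0 < n) {a b : ℝ} {w : Fin n → Fin p} :
    w ∈ meanWords p n (Ioo a b) ↔
      n * a < ∑ i, ((w i : ℕ) : ℝ) ∧ ∑ i, ((w i : ℕ) : ℝ) < n * b := by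
  have hn' : (0 : ℝ) < n := by exact_mod_cast hn
  rw [mem_meanWords, wordMean, mem_Ioo, lt_div_iff₀ hn', div_lt_iff₀ hn', mul_comm a, mul_comm b]

lemma hcount_eq_card_meanWords (p : ℕ) {n : ℕ} (hn : 0 < n) (t δ : ℝ) :
    hcount p n t δ = (meanWords p n (Ioo (t - δ) (t + δ))).card :=
  Nat.subtype_card _ fun _ => mem_meanWords_Ioo hn

/-! ### The entropy function -/

/-- The exponential growth rate `log h(t,n,δ) / (n log p)` whose upper limit enters the entropy. -/
def wordRate (p : ℕ) (t δ : ℝ) (n : ℕ) : ℝ := Real.log (hcount p n t δ) / (n * Real.log p)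

lemma wordRate_mem_Icc (p : ℕ) (t δ : ℝ) (n : ℕ) : wordRate p t δ n ∈ Icc (0 : ℝ) 1 := by
  have hlog : 0 ≤ n * Real.log p := mul_nonneg n.cast_nonneg (Real.log_natCast_nonneg p)
  refine ⟨div_nonneg (Real.log_natCast_nonneg _) hlog, div_le_one_of_le₀ ?_ hlog⟩
  rcases (hcount p n t δ).eq_zero_or_pos with h | h
  · simpa [h] using hlog
  · have hle : hcount p n t δ ≤ p ^ n := (Finite.card_subtype_le _).trans (by simp)
    rw [← Real.log_pow]
    exact Real.log_le_log (by exact_mod_cast h) (by exact_mod_cast hle)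

lemma isBoundedUnder_le_wordRate (p : ℕ) (t δ : ℝ) :
    IsBoundedUnder (· ≤ ·) atTop (wordRate p t δ) :=
  isBoundedUnder_of ⟨1, fun n => (wordRate_mem_Icc p t δ n).2⟩

lemma limsup_wordRate_mem_Icc (p : ℕ) (t δ : ℝ) :
    limsup (wordRate p t δ) atTop ∈ Icc (0 : ℝ) 1 :=
  limsup_mem_Icc (.of_forall fun n => (wordRate_mem_Icc p t δ n).1)
    (.of_forall fun n => (wordRate_mem_Icc p t δ n).2)

lemma entropy_le_limsup_wordRate (p : ℕ) (t : ℝ) {δ : ℝ} (hδ : 0 < δ) :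
    entropy p t ≤ limsup (wordRate p t δ) atTop :=
  ciInf_le (f := fun δ : {δ : ℝ // 0 < δ} => limsup (wordRate p t δ) atTop)
    ⟨0, forall_mem_range.2 fun δ => (limsup_wordRate_mem_Icc p t δ).1⟩ ⟨δ, hδ⟩

lemma entropy_mem_Icc (p : ℕ) (t : ℝ) : entropy p t ∈ Icc (0 : ℝ) 1 :=
  ⟨Real.iInf_nonneg fun δ => (limsup_wordRate_mem_Icc p t δ).1,
    (entropy_le_limsup_wordRate p t one_pos).trans (limsup_wordRate_mem_Icc p t 1).2⟩

lemma le_iSup_entropy (p : ℕ) {s : Set ℝ} {t : ℝ} (ht : t ∈ s) :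
    entropy p t ≤ ⨆ t ∈ s, entropy p t := by
  have hbdd : BddAbove (range fun t => ⨆ _ : t ∈ s, entropy p t) :=
    ⟨1, forall_mem_range.2 fun t => Real.iSup_le (fun _ => (entropy_mem_Icc p t).2) zero_le_one⟩
  simpa [ht] using le_ciSup hbdd t

lemma wordRate_le_iff {p n : ℕ} (hp : 1 < p) (hn : 0 < n) {t δ c : ℝ} :
    wordRate p t δ n ≤ c ↔ Real.log (hcount p n t δ) ≤ n * c * Real.log p := by
  have hlog : 0 < Real.log p := Real.log_pos (by exact_mod_cast hp)
  have : (0 : ℝ) < n := by exact_mod_cast hn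
  rw [wordRate, div_le_iff₀ (by positivity), ← mul_assoc, mul_comm c]

lemma hcount_le_rpow_of_wordRate_le {p n : ℕ} (hp : 1 < p) (hn : 0 < n) {t δ c : ℝ}
    (h : wordRate p t δ n ≤ c) : (hcount p n t δ : ℝ) ≤ (p : ℝ) ^ (n * c) := by
  have hp' : (0 : ℝ) < p := by positivity
  rcases (hcount p n t δ).eq_zero_or_pos with h0 | h0
  · rw [h0, Nat.cast_zero]
    positivity
  · exact (Real.le_rpow_iff_log_le (by exact_mod_cast h0) hp').2 ((wordRate_le_iff hp hn).1 h)

lemma wordRate_le_of_hcount_le_rpow {p n : ℕ} (hp : 1 < p) (hn : 0 < n) {t δ c : ℝ} (hc : 0 ≤ c)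
    (h : (hcount p n t δ : ℝ) ≤ (p : ℝ) ^ (n * c)) : wordRate p t δ n ≤ c := by
  have hp' : (0 : ℝ) < p := by positivity
  refine (wordRate_le_iff hp hn).2 ?_
  rcases (hcount p n t δ).eq_zero_or_pos with h0 | h0
  · have := Real.log_natCast_nonneg p
    rw [h0, Nat.cast_zero, Real.log_zero]
    positivity
  · exact (Real.le_rpow_iff_log_le (by exact_mod_cast h0) hp').1 h

lemma exists_eventually_hcount_le_rpow {p : ℕ} (hp : 1 < p) {t c : ℝ} (h : entropy p t < c) :
    ∃ δ > 0, ∀ᶠ n : ℕ in atTop, (hcount p n t δ : ℝ) ≤ (p : ℝ) ^ (n * c) := by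
  have : Nonempty {δ : ℝ // 0 < δ} := ⟨⟨1, one_pos⟩⟩
  obtain ⟨⟨δ, hδ⟩, hlt⟩ := exists_lt_of_ciInf_lt h
  refine ⟨δ, hδ, ?_⟩
  filter_upwards [eventually_lt_of_limsup_lt hlt (isBoundedUnder_le_wordRate p t δ),
    eventually_gt_atTop 0] with n hn hpos
  exact hcount_le_rpow_of_wordRate_le hp hpos (le_of_lt hn)

lemma entropy_le_of_eventually_hcount_le_rpow {p : ℕ} (hp : 1 < p) {t δ c : ℝ} (hδ : 0 < δ)
    (hc : 0 ≤ c) (h : ∀ᶠ n : ℕ in atTop, (hcount p n t δ : ℝ) ≤ (p : ℝ) ^ (n * c)) :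
    entropy p t ≤ c := by
  refine (entropy_le_limsup_wordRate p t hδ).trans
    (limsup_mem_Icc (.of_forall fun n => (wordRate_mem_Icc p t δ n).1) ?_).2
  filter_upwards [h, eventually_gt_atTop 0] with n hn hpos
  exact wordRate_le_of_hcount_le_rpow hp hpos hc hn

lemma frequently_rpow_lt_hcount {p : ℕ} (hp : 1 < p) {t δ c : ℝ} (hδ : 0 < δ) (hc : 0 ≤ c)
    (h : c < entropy p t) : ∃ᶠ n : ℕ in atTop, (p : ℝ) ^ (n * c) < hcount p n t δ := by
  refine fun hle => h.not_ge (entropy_le_of_eventually_hcount_le_rpow hp hδ hc ?_)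
  simpa only [not_lt] using hle

lemma exists_mem_nhdsSet_eventually_card_meanWords_le_mul {p : ℕ} (hp : 1 < p) {K : Set ℝ}
    (hK : IsCompact K) {c : ℝ} (hc : ∀ t ∈ K, entropy p t < c) :
    ∃ U ∈ 𝓝ˢ K, ∃ C : ℝ,
      ∀ᶠ n : ℕ in atTop, ((meanWords p n U).card : ℝ) ≤ C * (p : ℝ) ^ (n * c) := by
  refine hK.induction_on (p := fun K => ∃ U ∈ 𝓝ˢ K, ∃ C : ℝ,
    ∀ᶠ n : ℕ in atTop, ((meanWords p n U).card : ℝ) ≤ C * (p : ℝ) ^ (n * c))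
    ⟨∅, by simp, 0, by simp [meanWords]⟩ ?_ ?_ ?_
  · rintro s t hst ⟨U, hU, C, hC⟩
    exact ⟨U, nhdsSet_mono hst hU, C, hC⟩
  · rintro s t ⟨U, hU, C, hC⟩ ⟨V, hV, D, hD⟩
    refine ⟨U ∪ V, union_mem_nhdsSet hU hV, C + D, ?_⟩
    filter_upwards [hC, hD] with n hn hn'
    calc ((meanWords p n (U ∪ V)).card : ℝ)
        ≤ (meanWords p n U).card + (meanWords p n V).card := by
          exact_mod_cast card_meanWords_union_le p n U V
      _ ≤ (C + D) * (p : ℝ) ^ (n * c) := by linarith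
  · intro t ht
    obtain ⟨δ, hδ, hcount⟩ := exists_eventually_hcount_le_rpow hp (hc t ht)
    refine ⟨Ioo (t - δ) (t + δ), mem_nhdsWithin_of_mem_nhds
      (Ioo_mem_nhds (by linarith) (by linarith)), _, isOpen_Ioo.mem_nhdsSet.2 subset_rfl, 1, ?_⟩
    filter_upwards [hcount, eventually_gt_atTop 0] with n hn hpos
    rwa [one_mul, ← hcount_eq_card_meanWords p hpos]

lemma exists_mem_nhdsSet_eventually_card_meanWords_le {p : ℕ} (hp : 1 < p) {K : Set ℝ}
    (hK : IsCompact K) {c d : ℝ} (hc : ∀ t ∈ K, entropy p t ≤ c) (hcd : c < d) :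
    ∃ U ∈ 𝓝ˢ K, ∀ᶠ n : ℕ in atTop, ((meanWords p n U).card : ℝ) ≤ (p : ℝ) ^ (n * d) := by
  have hp' : (1 : ℝ) < p := by exact_mod_cast hp
  obtain ⟨e, hce, hed⟩ := exists_between hcd
  obtain ⟨U, hU, C, hC⟩ :=
    exists_mem_nhdsSet_eventually_card_meanWords_le_mul hp hK fun t ht => (hc t ht).trans_lt hce
  have hgrowth : ∀ᶠ n : ℕ in atTop, C ≤ ((p : ℝ) ^ (d - e)) ^ n :=
    (tendsto_pow_atTop_atTop_of_one_lt (Real.one_lt_rpow hp' (sub_pos.2 hed))).eventually_ge_atTop C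
  refine ⟨U, hU, ?_⟩
  filter_upwards [hC, hgrowth] with n hn hCn
  calc ((meanWords p n U).card : ℝ)
      ≤ C * (p : ℝ) ^ (n * e) := hn
    _ ≤ ((p : ℝ) ^ (d - e)) ^ n * (p : ℝ) ^ (n * e) := by gcongr
    _ = (p : ℝ) ^ (n * d) := by
      rw [← Real.rpow_mul_natCast (by positivity), ← Real.rpow_add (by positivity)]
      congr 1
      ring

/-! ### Moving digit means and the upper bound -/

lemma msum_div_mem_Icc {p : ℕ} (hp : 0 < p) (x : ℝ) (m n : ℕ) :
    (msum p x m n : ℝ) / n ∈ Icc (0 : ℝ) p := by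
  have : NeZero p := ⟨hp.ne'⟩
  exact msum_div_eq_wordMean p x m n ▸ wordMean_mem_Icc _

lemma lowerMn_mem_Icc {p : ℕ} (hp : 0 < p) (x : ℝ) (n : ℕ) : lowerMn p x n ∈ Icc (0 : ℝ) p :=
  liminf_mem_Icc (.of_forall fun m => (msum_div_mem_Icc hp x m n).1)
    (.of_forall fun m => (msum_div_mem_Icc hp x m n).2)

lemma upperMn_mem_Icc {p : ℕ} (hp : 0 < p) (x : ℝ) (n : ℕ) : upperMn p x n ∈ Icc (0 : ℝ) p :=
  limsup_mem_Icc (.of_forall fun m => (msum_div_mem_Icc hp x m n).1)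
    (.of_forall fun m => (msum_div_mem_Icc hp x m n).2)

lemma eventually_eventually_msum_div_mem_Ioo {p : ℕ} (hp : 0 < p) {x a b : ℝ}
    (ha : a < lowerM p x) (hb : upperM p x < b) :
    ∀ᶠ n : ℕ in atTop, ∀ᶠ m : ℕ in atTop, (msum p x m n : ℝ) / n ∈ Ioo a b := by
  have hmem := msum_div_mem_Icc hp x
  filter_upwards [
    eventually_lt_of_lt_liminf ha (isBoundedUnder_of ⟨0, fun n => (lowerMn_mem_Icc hp x n).1⟩),
    eventually_lt_of_limsup_lt hb (isBoundedUnder_of ⟨p, fun n => (upperMn_mem_Icc hp x n).2⟩)]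
    with n han hnb
  filter_upwards [
    eventually_lt_of_lt_liminf han (isBoundedUnder_of ⟨0, fun m => (hmem m n).1⟩),
    eventually_lt_of_limsup_lt hnb (isBoundedUnder_of ⟨p, fun m => (hmem m n).2⟩)] with m ham hmb
  exact ⟨ham, hmb⟩

/-- The points of `[0,1]` whose digits after position `m`, read in consecutive words of length `n`,
always form words in `W`. -/
def windowSet (p : ℕ) [NeZero p] (m n : ℕ) (W : Finset (Fin n → Fin p)) : Set ℝ :=
  {x | x ∈ Icc (0 : ℝ) 1 ∧ ∀ j : ℕ, digitWord p x (m + j * n) n ∈ W}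

lemma padicPrefix_add_mul_congr {p : ℕ} [NeZero p] {x y : ℝ} {m n k : ℕ}
    (hm : padicPrefix p x m = padicPrefix p y m)
    (hk : ∀ j < k, digitWord p x (m + j * n) n = digitWord p y (m + j * n) n) :
    padicPrefix p x (m + k * n) = padicPrefix p y (m + k * n) := by
  induction k with
  | zero => simpa using hm
  | succ k ih =>
    rw [Nat.succ_mul, ← add_assoc]
    exact padicPrefix_add_congr_digitWord (ih fun j hj => hk j (hj.trans k.lt_succ_self))
      (hk k k.lt_succ_self)

lemma pow_mul_inv_pow_rpow_le_one {p : ℝ} (hp : 1 ≤ p) {w d : ℝ} (hw : 0 ≤ w) (hd : 0 ≤ d) {n : ℕ}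
    (hwd : w ≤ p ^ (n * d)) (m k : ℕ) : w ^ k * (p ^ (m + k * n))⁻¹ ^ d ≤ 1 := by
  have hp0 : 0 < p := zero_lt_one.trans_le hp
  rw [Real.inv_rpow (by positivity), ← div_eq_mul_inv, div_le_one (by positivity)]
  calc w ^ k
      ≤ (p ^ (n * d)) ^ k := by gcongr
    _ = (p ^ (k * n)) ^ d := by
      rw [← Real.rpow_mul_natCast hp0.le, ← Real.rpow_natCast, ← Real.rpow_mul hp0.le]
      push_cast
      ring_nf
    _ ≤ (p ^ (m + k * n)) ^ d := by
      gcongr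
      exact Nat.le_add_left _ _

lemma dimH_windowSet_le {p : ℕ} [NeZero p] (hp : 1 < p) (m : ℕ) {n : ℕ} (hn : 0 < n)
    {W : Finset (Fin n → Fin p)} {d : ℝ≥0} (hW : (W.card : ℝ) ≤ (p : ℝ) ^ (n * (d : ℝ))) :
    dimH (windowSet p m n W) ≤ d := by
  have hp' : (1 : ℝ) < p := by exact_mod_cast hp
  let P : Finset ℤ := Finset.Icc (-1) (p ^ m - 1)
  let cell (k : ℕ) (i : P × (Fin k → W)) : Set ℝ :=
    {x | padicPrefix p x m = i.1 ∧ ∀ j : Fin k, digitWord p x (m + j * n) n = i.2 j}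
  let r (k : ℕ) : ℝ := ((p : ℝ) ^ (m + k * n))⁻¹
  have hr : Tendsto (fun k => ENNReal.ofReal (r k)) atTop (𝓝 0) := by
    have hlen : Tendsto (fun k : ℕ => m + k * n) atTop atTop :=
      tendsto_atTop_mono (fun k => le_add_left (Nat.le_mul_of_pos_right k hn)) tendsto_id
    simpa using ENNReal.tendsto_ofReal
      ((tendsto_pow_atTop_atTop_of_one_lt hp').comp hlen).inv_tendsto_atTop
  refine dimH_le_of_forall_cover (C := ENNReal.ofReal P.card) ENNReal.ofReal_ne_top hr cell ?_ ?_ ?_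
  · rintro k x ⟨hx, hxW⟩
    exact mem_iUnion.2
      ⟨(⟨_, padicPrefix_mem_Icc hp.le hx m⟩, fun j => ⟨_, hxW j⟩), rfl, fun _ => rfl⟩
  · rintro k i
    refine Metric.ediam_le fun x hx y hy => ?_
    rw [edist_dist, Real.dist_eq]
    refine ENNReal.ofReal_le_ofReal (abs_sub_le_of_padicPrefix_eq (by omega)
      (padicPrefix_add_mul_congr (hx.1.trans hy.1.symm) fun j hj => ?_))
    exact (hx.2 ⟨j, hj⟩).trans (hy.2 ⟨j, hj⟩).symm
  · intro k
    have hrk : 0 ≤ r k := by positivity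
    have hcard : (Fintype.card (P × (Fin k → W)) : ℝ≥0∞) =
        ENNReal.ofReal (P.card * (W.card : ℝ) ^ k) := by
      rw [← ENNReal.ofReal_natCast]
      simp
    rw [hcard, ENNReal.ofReal_rpow_of_nonneg hrk d.coe_nonneg, ← ENNReal.ofReal_mul (by positivity)]
    refine ENNReal.ofReal_le_ofReal ?_
    rw [mul_assoc]
    exact mul_le_of_le_one_right (by positivity)
      (pow_mul_inv_pow_rpow_le_one hp'.le (by positivity) d.2 hW m k)

lemma BanachSet_subset_iUnion_windowSet {p : ℕ} [NeZero p] {α β : ℝ} (h : α ≤ β) {U : Set ℝ}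
    (hU : U ∈ 𝓝ˢ (Icc α β)) (N : ℕ) :
    BanachSet p α β ⊆ ⋃ n ≥ N, ⋃ m, windowSet p m n (meanWords p n U) := by
  obtain ⟨a, ha, b, hb, hab⟩ := exists_Ioo_subset_of_mem_nhdsSet_Icc h hU
  rintro x ⟨hx, rfl, rfl⟩
  obtain ⟨n, hn, hNn⟩ := ((eventually_eventually_msum_div_mem_Ioo (NeZero.pos p) ha hb).and
    (eventually_ge_atTop N)).exists
  obtain ⟨m, hm⟩ := eventually_atTop.1 hn
  simp only [mem_iUnion]
  refine ⟨n, hNn, m, hx, fun j => mem_meanWords.2 (hab ?_)⟩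
  rw [← msum_div_eq_wordMean]
  exact hm _ (Nat.le_add_right _ _)

lemma dimH_BanachSet_le {p : ℕ} (hp : 1 < p) {α β : ℝ} (h : α ≤ β) {s : ℝ}
    (hs : ∀ t ∈ Icc α β, entropy p t ≤ s) : dimH (BanachSet p α β) ≤ ENNReal.ofReal s := by
  have : NeZero p := ⟨by omega⟩
  have hs0 : 0 ≤ s := (entropy_mem_Icc p α).1.trans (hs α (left_mem_Icc.2 h))
  refine ENNReal.le_of_forall_pos_le_add fun ε hε _ => ?_
  obtain ⟨U, hU, hcard⟩ := exists_mem_nhdsSet_eventually_card_meanWords_le hp isCompact_Icc hs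
    (lt_add_of_pos_right s (show (0 : ℝ) < ε from hε))
  obtain ⟨N, hN⟩ := eventually_atTop.1 (hcard.and (eventually_gt_atTop 0))
  refine (dimH_mono (BanachSet_subset_iUnion_windowSet h hU N)).trans ?_
  simp only [dimH_iUnion, iSup_le_iff]
  intro n hn m
  obtain ⟨hWn, hpos⟩ := hN n hn
  refine dimH_windowSet_le (d := s.toNNReal + ε) hp m hpos ?_
  rwa [NNReal.coe_add, Real.coe_toNNReal s hs0]

/-! ### Points with prescribed digits -/

lemma padicPrefix_eq_of_mul_pow_eq {p K : ℕ} {x y : ℝ} {z : ℤ} (hy : y ∈ Ioc (0 : ℝ) 1)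
    (h : x * p ^ K = z + y) : padicPrefix p x K = z := by
  rw [padicPrefix, h, Int.ceil_intCast_add, Int.ceil_eq_iff (z := 1) |>.2 (by simpa using hy)]
  ring

lemma ofDigits_shift_mul_base {p : ℕ} (d : ℕ → Fin p) (K : ℕ) :
    (Real.ofDigits fun i => d (i + K)) * p =
      (d K : ℕ) + Real.ofDigits fun i => d (i + (K + 1)) := by
  have hp : (p : ℝ) ≠ 0 := by exact_mod_cast (Fin.pos (d 0)).ne'
  rw [Real.ofDigits_eq_sum_add_ofDigits _ 1]
  simp only [Finset.sum_range_one, Real.ofDigitsTerm, zero_add, pow_one, add_assoc, add_comm 1 K]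
  field_simp

lemma exists_ofDigits_mul_pow_eq {p : ℕ} (d : ℕ → Fin p) (K : ℕ) :
    ∃ z : ℤ, Real.ofDigits d * p ^ K = z + Real.ofDigits fun i => d (i + K) := by
  induction K with
  | zero => exact ⟨0, by simp⟩
  | succ K ih =>
    obtain ⟨z, hz⟩ := ih
    refine ⟨z * p + (d K : ℕ), ?_⟩
    rw [pow_succ, ← mul_assoc, hz, add_mul, ofDigits_shift_mul_base]
    push_cast
    ring

lemma ofDigits_pos {p : ℕ} {d : ℕ → Fin p} {i : ℕ} (hi : (d i : ℕ) ≠ 0) :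
    0 < Real.ofDigits d := by
  have hp : 0 < p := Fin.pos (d 0)
  have : (0 : ℝ) < (d i : ℕ) := by exact_mod_cast Nat.pos_of_ne_zero hi
  refine Real.summable_ofDigitsTerm.tsum_pos (fun _ => Real.ofDigitsTerm_nonneg) i ?_
  rw [Real.ofDigitsTerm]
  positivity

lemma padicDigit_ofDigits {p : ℕ} {d : ℕ → Fin p} (hd : ∃ᶠ i in atTop, (d i : ℕ) ≠ 0) (n : ℕ) :
    padicDigit p (Real.ofDigits d) n = (d n : ℕ) := by
  have htail (K : ℕ) : Real.ofDigits (fun i => d (i + K)) ∈ Ioc (0 : ℝ) 1 := by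
    obtain ⟨i, hKi, hi⟩ := frequently_atTop.1 hd K
    exact ⟨ofDigits_pos (i := i - K) (by rwa [Nat.sub_add_cancel hKi]), Real.ofDigits_le_one _⟩
  obtain ⟨z, hz⟩ := exists_ofDigits_mul_pow_eq d n
  have hz' : Real.ofDigits d * (p : ℝ) ^ (n + 1) =
      ((p * z + (d n : ℕ) : ℤ) : ℝ) + Real.ofDigits fun i => d (i + (n + 1)) := by
    rw [pow_succ, ← mul_assoc, hz, add_mul, ofDigits_shift_mul_base]
    push_cast
    ring
  have hsucc := padicPrefix_succ p (Real.ofDigits d) n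
  rw [padicPrefix_eq_of_mul_pow_eq (htail n) hz,
    padicPrefix_eq_of_mul_pow_eq (htail (n + 1)) hz'] at hsucc
  linarith

lemma padicPrefix_eq_of_padicPrefix_succ_eq {p : ℕ} (hp : 0 < p) {x y : ℝ} {K : ℕ}
    (h : padicPrefix p x (K + 1) = padicPrefix p y (K + 1)) :
    padicPrefix p x K = padicPrefix p y K := by
  have hdiv (z : ℝ) : padicPrefix p z (K + 1) / p = padicPrefix p z K := by
    rw [padicPrefix_succ, Int.mul_add_ediv_left _ _ (by exact_mod_cast hp.ne'),
      Int.ediv_eq_zero_of_lt (padicDigit_nonneg hp z K) (padicDigit_lt p z K), add_zero]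
  rw [← hdiv x, ← hdiv y, h]

lemma padicDigit_eq_of_padicPrefix_eq {p : ℕ} (hp : 0 < p) {x y : ℝ} {K : ℕ}
    (h : padicPrefix p x K = padicPrefix p y K) {i : ℕ} (hi : i < K) :
    padicDigit p x i = padicDigit p y i := by
  induction K with
  | zero => omega
  | succ K ih =>
    have hK := padicPrefix_eq_of_padicPrefix_succ_eq hp h
    rcases Nat.lt_succ_iff_lt_or_eq.1 hi with hi | rfl
    · exact ih hK hi
    · rw [padicPrefix_succ, padicPrefix_succ, hK] at h
      exact add_left_cancel h

lemma inv_pow_le_abs_sub_of_padicDigit_ne {p : ℕ} (hp : 1 < p) {x y : ℝ} {i q : ℕ} (hiq : i < q)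
    (hi : padicDigit p x i ≠ padicDigit p y i) (hq : padicDigit p x q = padicDigit p y q) :
    ((p : ℝ) ^ (q + 1))⁻¹ ≤ |x - y| := by
  wlog hlt : padicPrefix p x q < padicPrefix p y q generalizing x y
  · rw [abs_sub_comm]
    exact this hi.symm hq.symm ((not_lt.1 hlt).lt_of_ne fun h =>
      hi (padicDigit_eq_of_padicPrefix_eq (by omega) h.symm hiq))
  have hpos : (0 : ℝ) < (p : ℝ) ^ (q + 1) := by positivity
  have hgap : padicPrefix p x (q + 1) + 2 ≤ padicPrefix p y (q + 1) := by
    rw [padicPrefix_succ, padicPrefix_succ, hq]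
    have : (2 : ℤ) ≤ p := by exact_mod_cast hp
    nlinarith
  have hgap' : (padicPrefix p x (q + 1) : ℝ) + 2 ≤ padicPrefix p y (q + 1) := by
    exact_mod_cast hgap
  rw [← one_div, div_le_iff₀ hpos, abs_sub_comm]
  calc (1 : ℝ)
      ≤ (y - x) * (p : ℝ) ^ (q + 1) := by
        linarith [padicPrefix_lt p y (q + 1), le_padicPrefix_add_one p x (q + 1)]
    _ ≤ |y - x| * (p : ℝ) ^ (q + 1) := by gcongr; exact le_abs_self _

lemma tendsto_of_eventually_mem_Icc_div {u : ℕ → ℝ} {a C : ℝ}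
    (h : ∀ᶠ n : ℕ in atTop, u n ∈ Icc (a - C / n) (a + C / n)) : Tendsto u atTop (𝓝 a) := by
  have hC := tendsto_const_div_atTop_nhds_zero_nat C
  exact tendsto_of_tendsto_of_tendsto_of_le_of_le' (by simpa using hC.const_sub a)
    (by simpa using hC.const_add a) (h.mono fun _ hn => hn.1) (h.mono fun _ hn => hn.2)

lemma lowerM_eq_of_msum_bounds {p : ℕ} {x a C : ℝ} (hle : ∀ m n : ℕ, n * a - C ≤ msum p x m n)
    (hfreq : ∀ n : ℕ, ∃ᶠ m in atTop, (msum p x m n : ℝ) ≤ n * a + C) : lowerM p x = a := by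
  refine (tendsto_of_eventually_mem_Icc_div (C := C) ?_).liminf_eq
  filter_upwards [eventually_gt_atTop 0] with n hn
  have hn' : (0 : ℝ) < n := by exact_mod_cast hn
  refine liminf_mem_Icc (.of_forall fun m => ?_) ((hfreq n).mono fun m hm => ?_)
  · rw [le_div_iff₀ hn', sub_mul, div_mul_cancel₀ _ hn'.ne', mul_comm]
    exact hle m n
  · rw [div_le_iff₀ hn', add_mul, div_mul_cancel₀ _ hn'.ne', mul_comm]
    exact hm

lemma upperM_eq_of_msum_bounds {p : ℕ} {x a C : ℝ} (hle : ∀ m n : ℕ, msum p x m n ≤ n * a + C)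
    (hfreq : ∀ n : ℕ, ∃ᶠ m in atTop, n * a - C ≤ (msum p x m n : ℝ)) : upperM p x = a := by
  refine (tendsto_of_eventually_mem_Icc_div (C := C) ?_).limsup_eq
  filter_upwards [eventually_gt_atTop 0] with n hn
  have hn' : (0 : ℝ) < n := by exact_mod_cast hn
  refine limsup_mem_Icc ((hfreq n).mono fun m hm => ?_) (.of_forall fun m => ?_)
  · rw [le_div_iff₀ hn', sub_mul, div_mul_cancel₀ _ hn'.ne', mul_comm]
    exact hm
  · rw [div_le_iff₀ hn', add_mul, div_mul_cancel₀ _ hn'.ne', mul_comm]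
    exact hle m n

section Target

variable {p : ℕ} {x α β C : ℝ} {σ : ℕ → ℝ} (hσ : ∀ i, σ i ∈ Icc α β)
include hσ

lemma sum_range_mem_Icc (m n : ℕ) :
    ∑ i ∈ Finset.range n, σ (m + i) ∈ Icc (n * α) (n * β) := by
  constructor
  · simpa using Finset.card_nsmul_le_sum (Finset.range n) _ α fun i _ => (hσ (m + i)).1
  · simpa using Finset.sum_le_card_nsmul (Finset.range n) _ β fun i _ => (hσ (m + i)).2

lemma mem_BanachSet_of_abs_msum_sub_le (hx : x ∈ Icc (0 : ℝ) 1)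
    (hα : ∀ n, ∃ᶠ m in atTop, ∀ i < n, σ (m + i) = α)
    (hβ : ∀ n, ∃ᶠ m in atTop, ∀ i < n, σ (m + i) = β)
    (hC : ∀ m n, |(msum p x m n : ℝ) - ∑ i ∈ Finset.range n, σ (m + i)| ≤ C) :
    x ∈ BanachSet p α β := by
  have hrun {a : ℝ} {m n : ℕ} (h : ∀ i < n, σ (m + i) = a) :
      ∑ i ∈ Finset.range n, σ (m + i) = n * a := by
    simpa using Finset.sum_congr rfl fun i hi => h i (Finset.mem_range.1 hi)
  refine ⟨hx, lowerM_eq_of_msum_bounds (C := C) (fun m n => ?_) fun n => (hα n).mono fun m hm => ?_,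
    upperM_eq_of_msum_bounds (C := C) (fun m n => ?_) fun n => (hβ n).mono fun m hm => ?_⟩ <;>
    have h := abs_le.1 (hC m n)
  · linarith [(sum_range_mem_Icc hσ m n).1]
  · linarith [hrun hm]
  · linarith [(sum_range_mem_Icc hσ m n).2]
  · linarith [hrun hm]

end Target

lemma frequently_ne_zero_of_abs_sum_sub_le {d : ℕ → ℕ} {σ : ℕ → ℝ} {β C : ℝ} (hβ : 0 < β)
    (hrun : ∀ n, ∃ᶠ m in atTop, ∀ i < n, σ (m + i) = β)
    (hC : ∀ m n, |∑ i ∈ Finset.range n, ((d (m + i) : ℝ) - σ (m + i))| ≤ C) :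
    ∃ᶠ i in atTop, d i ≠ 0 := by
  obtain ⟨n, hn⟩ := exists_nat_gt (C / β)
  rw [div_lt_iff₀ hβ] at hn
  refine frequently_atTop.2 fun K => ?_
  obtain ⟨m, hKm, hm⟩ := frequently_atTop.1 (hrun n) K
  by_contra! hzero
  have hsum : ∑ i ∈ Finset.range n, ((d (m + i) : ℝ) - σ (m + i)) = -(n * β) := by
    rw [Finset.sum_congr rfl fun i hi => by
      rw [hzero (m + i) (by omega), hm i (Finset.mem_range.1 hi)]]
    simp
  linarith [neg_le_abs (∑ i ∈ Finset.range n, ((d (m + i) : ℝ) - σ (m + i))), hC m n]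

lemma ofDigits_mem_BanachSet {p : ℕ} {d : ℕ → Fin p} (hd : ∃ᶠ i in atTop, (d i : ℕ) ≠ 0)
    {σ : ℕ → ℝ} {α β C : ℝ} (hσ : ∀ i, σ i ∈ Icc α β)
    (hα : ∀ n, ∃ᶠ m in atTop, ∀ i < n, σ (m + i) = α)
    (hβ : ∀ n, ∃ᶠ m in atTop, ∀ i < n, σ (m + i) = β)
    (hC : ∀ m n, |∑ i ∈ Finset.range n, (((d (m + i) : ℕ) : ℝ) - σ (m + i))| ≤ C) :
    Real.ofDigits d ∈ BanachSet p α β := by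
  refine mem_BanachSet_of_abs_msum_sub_le (C := C) hσ
    ⟨Real.ofDigits_nonneg d, Real.ofDigits_le_one d⟩ hα hβ fun m n => ?_
  simpa [msum, padicDigit_ofDigits hd] using hC m n

/-! ### Entropy at the extreme means -/

lemma coe_val_rev {p : ℕ} (a : Fin p) : ((a.rev : ℕ) : ℝ) = p - 1 - (a : ℕ) := by
  rw [Fin.val_rev, Nat.cast_sub a.is_lt]
  push_cast
  ring

lemma hcount_reflect (p n : ℕ) (t δ : ℝ) : hcount p n (p - 1 - t) δ = hcount p n t δ := by
  refine Nat.card_congr ((Equiv.piCongrRight fun _ => Fin.revPerm).subtypeEquiv fun w => ?_)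
  have hsum : ∑ i, ((Fin.rev (w i) : ℕ) : ℝ) = n * (p - 1) - ∑ i, ((w i : ℕ) : ℝ) := by
    simp_rw [coe_val_rev, Finset.sum_sub_distrib]
    simp [mul_sub]
  simp only [Equiv.piCongrRight_apply, Pi.map_apply, Fin.revPerm_apply, hsum]
  constructor <;> rintro ⟨h, h'⟩ <;> constructor <;> linarith

lemma entropy_reflect (p : ℕ) (t : ℝ) : entropy p (p - 1 - t) = entropy p t := by
  simp_rw [entropy, hcount_reflect]

lemma sum_pow_val_le {p : ℕ} {z : ℝ} (hz : z ∈ Ioc (0 : ℝ) 1) :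
    ∑ a : Fin p, z ^ (a : ℕ) ≤ 1 + p * z := by
  cases p with
  | zero => simp
  | succ k =>
    have htail : ∑ a : Fin k, z ^ (a.succ : ℕ) ≤ k * z := by
      simpa using Finset.sum_le_card_nsmul Finset.univ (fun a : Fin k => z ^ (a.succ : ℕ)) z
        fun a _ => pow_le_of_le_one hz.1.le hz.2 (by simp)
    rw [Fin.sum_univ_succ, Fin.val_zero, pow_zero]
    push_cast
    linarith [hz.1]

/- Chernoff's bound: a word of digit sum less than `nδ` has weight at least `z ^ (nδ)` under
`w ↦ z ^ (w₁ + ⋯ + w_n)`, whose total mass is a power of a geometric sum. -/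
lemma hcount_zero_mul_rpow_le (p n : ℕ) (δ : ℝ) {z : ℝ} (hz : z ∈ Ioc (0 : ℝ) 1) :
    hcount p n 0 δ * z ^ (n * δ) ≤ (1 + p * z) ^ n := by
  have hz0 := hz.1
  have : 0 ≤ ∑ a : Fin p, z ^ (a : ℕ) := Finset.sum_nonneg fun _ _ => by positivity
  have hweight (w : Fin n → Fin p) (hw : ∑ i, ((w i : ℕ) : ℝ) < n * (0 + δ)) :
      z ^ (n * δ) ≤ ∏ i, z ^ (w i : ℕ) := by
    rw [Finset.prod_pow_eq_pow_sum, ← Real.rpow_natCast]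
    refine Real.rpow_le_rpow_of_exponent_ge hz.1 hz.2 ?_
    push_cast
    linarith
  rw [hcount, Nat.card_eq_fintype_card, Fintype.card_subtype, ← nsmul_eq_mul]
  calc _ ≤ ∑ w ∈ Finset.univ.filter fun w : Fin n → Fin p =>
        (n : ℝ) * (0 - δ) < ∑ i, ((w i : ℕ) : ℝ) ∧ ∑ i, ((w i : ℕ) : ℝ) < n * (0 + δ),
          ∏ i, z ^ (w i : ℕ) :=
        Finset.card_nsmul_le_sum _ _ _ fun w hw => hweight w (Finset.mem_filter.1 hw).2.2
    _ ≤ ∑ w : Fin n → Fin p, ∏ i, z ^ (w i : ℕ) :=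
        Finset.sum_le_sum_of_subset_of_nonneg (Finset.filter_subset _ _) fun _ _ _ => by positivity
    _ = (∑ a : Fin p, z ^ (a : ℕ)) ^ n := by
        rw [Finset.sum_pow', Fintype.piFinset_univ]
    _ ≤ (1 + p * z) ^ n := by gcongr; exact sum_pow_val_le hz

lemma entropy_zero {p : ℕ} (hp : 1 < p) : entropy p 0 = 0 := by
  have hp' : (1 : ℝ) < p := by exact_mod_cast hp
  refine le_antisymm (le_of_forall_pos_le_add fun ε hε => ?_) (entropy_mem_Icc p 0).1
  have hz : ∀ᶠ z in 𝓝[>] (0 : ℝ), 1 + p * z < (p : ℝ) ^ ε :=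
    (Continuous.tendsto (f := fun z : ℝ => 1 + p * z) (by fun_prop) 0).eventually_lt_const
      (by simpa using Real.one_lt_rpow hp' hε) |>.filter_mono nhdsWithin_le_nhds
  obtain ⟨z, hz, hz01⟩ := (hz.and (Ioc_mem_nhdsGT one_pos)).exists
  have hz0 := hz01.1
  have hδ : ∀ᶠ δ in 𝓝[>] (0 : ℝ), 1 + p * z < (p : ℝ) ^ ε * z ^ δ :=
    (Continuous.tendsto (f := fun δ : ℝ => (p : ℝ) ^ ε * z ^ δ)
      (continuous_const.mul (Real.continuous_const_rpow hz0.ne')) 0).eventually_const_lt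
      (by simpa using hz) |>.filter_mono nhdsWithin_le_nhds
  obtain ⟨δ, hδ, hδ0⟩ := (hδ.and self_mem_nhdsWithin).exists
  rw [zero_add]
  refine entropy_le_of_eventually_hcount_le_rpow hp hδ0 hε.le (.of_forall fun n => ?_)
  refine le_of_mul_le_mul_right ?_ (by positivity : 0 < z ^ (n * δ))
  calc hcount p n 0 δ * z ^ (n * δ)
      ≤ (1 + p * z) ^ n := hcount_zero_mul_rpow_le p n δ hz01
    _ ≤ ((p : ℝ) ^ ε * z ^ δ) ^ n := by gcongr
    _ = (p : ℝ) ^ (n * ε) * z ^ (n * δ) := by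
      rw [mul_pow, ← Real.rpow_mul_natCast (by positivity), ← Real.rpow_mul_natCast hz0.le,
        mul_comm ε, mul_comm δ]

lemma entropy_sub_one {p : ℕ} (hp : 1 < p) : entropy p (p - 1) = 0 := by
  simpa [entropy_zero hp] using entropy_reflect p 0

lemma mem_Ioo_of_entropy_pos {p : ℕ} (hp : 1 < p) {t : ℝ} (ht : t ∈ Icc (0 : ℝ) (p - 1))
    (h : 0 < entropy p t) : t ∈ Ioo (0 : ℝ) (p - 1) := by
  refine ⟨ht.1.lt_of_ne ?_, ht.2.lt_of_ne ?_⟩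
  · rintro rfl
    exact h.ne' (entropy_zero hp)
  · rintro rfl
    exact h.ne' (entropy_sub_one hp)

/-! ### Many words with a prescribed digit sum -/

lemma exists_word_sum_eq {p r q : ℕ} (hp : 0 < p) (hq : q ≤ r * (p - 1)) :
    ∃ u : Fin r → Fin p, ∑ i, (u i : ℕ) = q := by
  induction r generalizing q with
  | zero => exact ⟨Fin.elim0, by simp; omega⟩
  | succ r ih =>
    rw [Nat.succ_mul] at hq
    obtain ⟨u, hu⟩ := ih (q := q - min q (p - 1)) (by omega)
    refine ⟨Fin.cons ⟨min q (p - 1), by omega⟩ u, ?_⟩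
    rw [Fin.sum_univ_succ]
    simp only [Fin.cons_zero, Fin.cons_succ, hu]
    omega

/-- The words of length `n` over `{0, …, p-1}` with digit sum `s`. -/
def sumWords (p n s : ℕ) : Finset (Fin n → Fin p) :=
  Finset.univ.filter fun w => ∑ i, (w i : ℕ) = s

lemma mem_sumWords {p n s : ℕ} {w : Fin n → Fin p} :
    w ∈ sumWords p n s ↔ ∑ i, (w i : ℕ) = s := by
  simp [sumWords]

lemma exists_hcount_le_mul_card_sumWords {p n : ℕ} (hn : 0 < n) {t δ : ℝ}
    (h : 0 < hcount p n t δ) :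
    ∃ s : ℕ, |(s : ℝ) - n * t| < n * δ ∧ hcount p n t δ ≤ (sumWords p n s).card * (n * p) := by
  rw [hcount_eq_card_meanWords p hn] at h ⊢
  set A := meanWords p n (Ioo (t - δ) (t + δ))
  let digitSum (w : Fin n → Fin p) : ℕ := ∑ i, (w i : ℕ)
  have hrange : A.image digitSum ⊆ Finset.range (n * p) := by
    refine Finset.image_subset_iff.2 fun w _ => Finset.mem_range.2 ?_
    simpa using Finset.sum_lt_sum_of_nonempty (f := fun i => (w i : ℕ)) (g := fun _ => p)
      ⟨⟨0, hn⟩, Finset.mem_univ _⟩ fun i _ => (w i).is_lt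
  obtain ⟨s, hs, hmax⟩ := Finset.exists_max_image (A.image digitSum)
    (fun s => (sumWords p n s).card) ((Finset.card_pos.1 h).image _)
  refine ⟨s, ?_, ?_⟩
  · obtain ⟨w, hw, rfl⟩ := Finset.mem_image.1 hs
    obtain ⟨h1, h2⟩ := (mem_meanWords_Ioo hn).1 hw
    rw [abs_lt]
    push_cast [digitSum]
    constructor <;> linarith
  · have hfibre : ∀ q ∈ A.image digitSum,
        (A.filter fun w => digitSum w = q).card ≤ (sumWords p n s).card := fun q hq =>
      (Finset.card_le_card (Finset.filter_subset_filter _ (Finset.subset_univ A))).trans (hmax q hq)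
    calc A.card
        ≤ (sumWords p n s).card * (A.image digitSum).card :=
          Finset.card_le_mul_card_image A _ hfibre
      _ ≤ (sumWords p n s).card * (n * p) := by
        gcongr
        simpa using Finset.card_le_card hrange

lemma frequently_exists_rpow_le_card_sumWords {p : ℕ} (hp : 1 < p) {t γ δ : ℝ} (hδ : 0 < δ)
    (hγ : 0 ≤ γ) (h : γ < entropy p t) :
    ∃ᶠ n : ℕ in atTop, ∃ s : ℕ, |(s : ℝ) - n * t| < n * δ ∧
      (p : ℝ) ^ (n * γ) ≤ (sumWords p n s).card := by
  have hp' : (1 : ℝ) < p := by exact_mod_cast hp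
  obtain ⟨γ', hγ, hγ'⟩ := exists_between h
  have hgrowth : ∀ᶠ n : ℕ in atTop, (n : ℝ) * p ≤ ((p : ℝ) ^ (γ' - γ)) ^ n := by
    have := isLittleO_coe_const_pow_of_one_lt (R := ℝ) (Real.one_lt_rpow hp' (sub_pos.2 hγ))
    filter_upwards [this.def (c := (p : ℝ)⁻¹) (by positivity)] with n hn
    rw [Real.norm_natCast, Real.norm_of_nonneg (by positivity),
      le_inv_mul_iff₀ (by positivity)] at hn
    linarith
  refine ((frequently_rpow_lt_hcount hp hδ (by linarith) hγ').and_eventually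
    (hgrowth.and (eventually_gt_atTop 0))).mono fun n ⟨hlt, hle, hn⟩ => ?_
  have hpos : (0 : ℝ) < hcount p n t δ := hlt.trans_le' (by positivity)
  obtain ⟨s, hs, hcard⟩ := exists_hcount_le_mul_card_sumWords hn (by exact_mod_cast hpos)
  refine ⟨s, hs, le_of_mul_le_mul_right ?_ (by positivity : (0 : ℝ) < n * p)⟩
  calc (p : ℝ) ^ (n * γ) * (n * p)
      ≤ (p : ℝ) ^ (n * γ) * ((p : ℝ) ^ (γ' - γ)) ^ n := by gcongr
    _ = (p : ℝ) ^ (n * γ') := by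
      rw [← Real.rpow_mul_natCast (by positivity), ← Real.rpow_add (by positivity)]
      congr 1
      ring
    _ ≤ (sumWords p n s).card * (n * p) := hlt.le.trans (by exact_mod_cast hcard)

lemma exists_injective_append_sum_eq {p n r s q : ℕ} (hp : 0 < p) (hsq : s ≤ q)
    (hq : q ≤ s + r * (p - 1)) :
    ∃ U : Fin (sumWords p n s).card → Fin (n + r) → Fin p, Function.Injective U ∧
      (∀ a, ∑ i, (U a i : ℕ) = q) ∧ ∀ a b i, U a (Fin.natAdd n i) = U b (Fin.natAdd n i) := by
  obtain ⟨u, hu⟩ := exists_word_sum_eq (r := r) (q := q - s) hp (by omega)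
  let e := (sumWords p n s).equivFin.symm
  refine ⟨fun a => Fin.append (e a).1 u, fun a b hab => ?_, fun a => ?_, fun a b i => by simp⟩
  · refine e.injective (Subtype.ext (funext fun i => ?_))
    simpa using congrFun hab (Fin.castAdd r i)
  · rw [Fin.sum_univ_add]
    simp only [Fin.append_left, Fin.append_right, mem_sumWords.1 (e a).2, hu]
    omega

lemma mem_Icc_of_abs_sub_lt {p n r s q : ℕ} (hp : 0 < p) {t δ : ℝ}
    (hs : |(s : ℝ) - n * t| < n * δ) (hq : |(q : ℝ) - (n + r) * t| < 1)
    (hr : n * δ + 1 ≤ r * min t (p - 1 - t)) : q ∈ Icc s (s + r * (p - 1)) := by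
  have hrt : r * min t (p - 1 - t) ≤ r * t := by gcongr; exact min_le_left _ _
  have hrt' : r * min t (p - 1 - t) ≤ r * (p - 1 - t) := by gcongr; exact min_le_right _ _
  rw [abs_lt] at hs hq
  constructor
  · have : (s : ℝ) ≤ q := by linarith
    exact_mod_cast this
  · have : (q : ℝ) ≤ (s + r * (p - 1) : ℕ) := by
      push_cast [Nat.cast_sub hp]
      linarith
    exact_mod_cast this

lemma eventually_add_one_le_floor_mul {δ η κ : ℝ} (hκ : 0 < κ) (h : δ < η * κ) :
    ∀ᶠ n : ℕ in atTop, n * δ + 1 ≤ ⌊η * n⌋₊ * κ := by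
  have htendsto : Tendsto (fun n : ℕ => n * (η * κ - δ)) atTop atTop :=
    tendsto_natCast_atTop_atTop.atTop_mul_const (sub_pos.2 h)
  filter_upwards [htendsto.eventually_ge_atTop (1 + κ)] with n hn
  have hfloor : (η * n - 1) * κ ≤ ⌊η * n⌋₊ * κ := by
    gcongr
    exact (Nat.sub_one_lt_floor _).le
  linarith

/- Appending to the words of one digit sum `s ≈ nt` a short filler brings their common digit sum to
any prescribed `q ≈ Nt`, at a negligible cost in length. -/
lemma exists_block_words {p : ℕ} (hp : 1 < p) {t γ : ℝ} (ht : t ∈ Ioo (0 : ℝ) (p - 1))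
    (hγ : 0 < γ) (h : γ < entropy p t) :
    ∃ (N : ℕ) (_ : NeZero N) (M : ℕ), (p : ℝ) ^ (N * γ) ≤ M ∧
      ∀ q : ℕ, |(q : ℝ) - N * t| < 1 → ∃ U : Fin M → Fin N → Fin p,
        Function.Injective U ∧ (∀ a, ∑ i, (U a i : ℕ) = q) ∧ ∀ a b, U a ⊤ = U b ⊤ := by
  obtain ⟨γ', hγγ', hγ'⟩ := exists_between h
  set κ := min t (p - 1 - t)
  have hκ : 0 < κ := lt_min ht.1 (sub_pos.2 ht.2)
  set η := (γ' - γ) / γ with hηdef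
  have : 0 < η := div_pos (sub_pos.2 hγγ') hγ
  have hδ : 0 < η * κ / 2 := by positivity
  obtain ⟨n, ⟨s, hs, hM⟩, hr⟩ := ((frequently_exists_rpow_le_card_sumWords hp hδ
    (hγ.trans hγγ').le hγ').and_eventually
      (eventually_add_one_le_floor_mul (η := η) hκ (half_lt_self (by positivity)))).exists
  set r := ⌊η * n⌋₊
  have hr0 : 0 < r := by
    refine Nat.pos_of_ne_zero fun hr0 => ?_
    rw [hr0, Nat.cast_zero, zero_mul] at hr
    linarith [mul_nonneg n.cast_nonneg hδ.le]
  have hlength : ((n + r : ℕ) : ℝ) * γ ≤ n * γ' := by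
    have : (r : ℝ) * γ ≤ η * n * γ := by gcongr; exact Nat.floor_le (by positivity)
    have : η * n * γ = n * (γ' - γ) := by rw [hηdef]; field_simp
    push_cast
    linarith
  refine ⟨n + r, ⟨by omega⟩, (sumWords p n s).card,
    (Real.rpow_le_rpow_of_exponent_le (by exact_mod_cast hp.le) hlength).trans hM, fun q hq => ?_⟩
  have hsq := mem_Icc_of_abs_sub_lt (by omega) hs (by push_cast at hq; exact hq) hr
  obtain ⟨U, hinj, hsum, hfill⟩ := exists_injective_append_sum_eq (by omega) hsq.1 hsq.2
  have : NeZero (n + r) := ⟨by omega⟩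
  have htop : (⊤ : Fin (n + r)) = Fin.natAdd n ⟨r - 1, by omega⟩ := by
    ext
    simp only [Fin.val_top, Fin.val_natAdd]
    omega
  exact ⟨U, hinj, hsum, fun a b => by rw [htop]; exact hfill a b _⟩

/-! ### Concatenating blocks -/

/-- The sequence obtained by writing the words `v 0, v 1, …` of length `N` one after another. -/
def concatBlocks {A : Type*} {N : ℕ} [NeZero N] (v : ℕ → Fin N → A) (i : ℕ) : A :=
  Function.uncurry v (Nat.divModEquiv N i)

lemma concatBlocks_mul_add {A : Type*} {N : ℕ} [NeZero N] (v : ℕ → Fin N → A) (j : ℕ)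
    (l : Fin N) : concatBlocks v (j * N + l) = v j l :=
  congrArg (Function.uncurry v) ((Nat.divModEquiv N).apply_symm_apply (j, l))

lemma sum_range_mul_eq_sum_sum {A : Type*} [AddCommMonoid A] (f : ℕ → A) (J N : ℕ) :
    ∑ i ∈ Finset.range (J * N), f i = ∑ j ∈ Finset.range J, ∑ l : Fin N, f (j * N + l) := by
  induction J with
  | zero => simp
  | succ J ih => rw [Nat.succ_mul, Finset.sum_range_add, ih, Finset.sum_range_succ,
      Finset.sum_range fun l => f (J * N + l)]

lemma abs_sum_range_add_le {f : ℕ → ℝ} {C : ℝ} (h : ∀ k, |∑ i ∈ Finset.range k, f i| ≤ C)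
    (m n : ℕ) : |∑ i ∈ Finset.range n, f (m + i)| ≤ C + C := by
  rw [← add_sub_cancel_left (∑ i ∈ Finset.range m, f i) (∑ i ∈ Finset.range n, f (m + i)),
    ← Finset.sum_range_add]
  exact (abs_sub _ _).trans (add_le_add (h _) (h _))

section Discrepancy

variable {p N : ℕ} [NeZero N] {v : ℕ → Fin N → Fin p} {τ : ℕ → ℝ}

lemma abs_sum_concatBlocks_sub_le_one (hτ : ∀ j, 0 ≤ τ j)
    (hv : ∀ j, ∑ l, (v j l : ℕ) = floorIncrement (fun j => N * τ j) j) (J : ℕ) :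
    |∑ i ∈ Finset.range (J * N), ((concatBlocks v i).val - τ (i / N))| ≤ 1 := by
  have hN : 0 < N := NeZero.pos N
  have hτN (j : ℕ) : 0 ≤ N * τ j := mul_nonneg N.cast_nonneg (hτ j)
  have hblock (j : ℕ) : ∑ l : Fin N, (((concatBlocks v (j * N + l)).val : ℝ) -
      τ ((j * N + l) / N)) = floorIncrement (fun j => N * τ j) j - N * τ j := by
    have hdiv (l : Fin N) : (j * N + l) / N = j := by
      rw [mul_comm, Nat.mul_add_div hN, Nat.div_eq_of_lt l.is_lt, add_zero]
    simp [concatBlocks_mul_add, hdiv, ← hv]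
  rw [sum_range_mul_eq_sum_sum, Finset.sum_congr rfl fun j _ => hblock j, Finset.sum_sub_distrib,
    ← Nat.cast_sum, sum_floorIncrement hτN, abs_sub_le_iff]
  have hnonneg := Finset.sum_nonneg fun j (_ : j ∈ Finset.range J) => hτN j
  constructor <;> linarith [Nat.floor_le hnonneg, Nat.lt_floor_add_one
    (∑ j ∈ Finset.range J, N * τ j)]

lemma abs_sum_concatBlocks_sub_le (hτ : ∀ j, τ j ∈ Icc (0 : ℝ) p)
    (hv : ∀ j, ∑ l, (v j l : ℕ) = floorIncrement (fun j => N * τ j) j) (m n : ℕ) :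
    |∑ i ∈ Finset.range n, (((concatBlocks v (m + i)).val : ℝ) - τ ((m + i) / N))| ≤
      (1 + N * p) + (1 + N * p) := by
  refine abs_sum_range_add_le (f := fun i => ((concatBlocks v i).val : ℝ) - τ (i / N))
    (abs_sum_range_le_of_abs_sum_range_mul_le (NeZero.pos N) (fun i => ?_)
      (abs_sum_concatBlocks_sub_le_one (fun j => (hτ j).1) hv)) m n
  have hlt : ((concatBlocks v i).val : ℝ) < p := by exact_mod_cast (concatBlocks v i).is_lt
  rw [abs_sub_le_iff]
  constructor <;> linarith [(hτ (i / N)).1, (hτ (i / N)).2,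
    (Nat.cast_nonneg (concatBlocks v i).val : (0 : ℝ) ≤ _)]

end Discrepancy

/- Agreement in the last digit of the block rules out a carry, which could bring two numbers with
different digits arbitrarily close together. -/
lemma inv_pow_le_abs_ofDigits_concatBlocks_sub {p N : ℕ} [NeZero N] (hp : 1 < p)
    {v w : ℕ → Fin N → Fin p} (hv : ∃ᶠ i in atTop, (concatBlocks v i).val ≠ 0)
    (hw : ∃ᶠ i in atTop, (concatBlocks w i).val ≠ 0) {j : ℕ} (hne : v j ≠ w j)
    (htop : v j ⊤ = w j ⊤) :
    ((p : ℝ) ^ ((j + 1) * N))⁻¹ ≤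
      |Real.ofDigits (concatBlocks v) - Real.ofDigits (concatBlocks w)| := by
  obtain ⟨l, hl⟩ := Function.ne_iff.1 hne
  have hlt : l < ⊤ := lt_top_iff_ne_top.2 fun h => hl (h ▸ htop)
  have hlength : j * N + (⊤ : Fin N) + 1 = (j + 1) * N := by
    rw [Fin.val_top, Nat.succ_mul]
    have := NeZero.pos N
    omega
  rw [← hlength]
  refine inv_pow_le_abs_sub_of_padicDigit_ne hp (i := j * N + l)
    (Nat.add_lt_add_left hlt _) ?_ ?_ <;>
    simp only [padicDigit_ofDigits hv, padicDigit_ofDigits hw, concatBlocks_mul_add]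
  · exact_mod_cast Fin.val_injective.ne hl
  · rw [htop]

lemma le_dimH_range_of_inv_pow_le {X : Type*} [MetricSpace X] {M : ℕ} (hM : 1 < M)
    {G : (ℕ → Fin M) → X} {C ρ : ℝ≥0} (hρ : 0 < ρ)
    (h : ∀ c c' k, c k ≠ c' k → ((M : ℝ) ^ k)⁻¹ ≤ C * dist (G c) (G c') ^ (ρ : ℝ)) :
    (ρ : ℝ≥0∞) ≤ dimH (range G) := by
  have hdim : 1 ≤ dimH (range (Real.ofDigits (b := M))) := by
    have hinterior : (interior (Icc (0 : ℝ) 1)).Nonempty := by simp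
    have : Icc (0 : ℝ) 1 ⊆ range (Real.ofDigits (b := M)) := (Real.ofDigits_SurjOn hM).subset_range
    simpa [Real.dimH_of_nonempty_interior hinterior] using dimH_mono this
  have hdist (c c' : ℕ → Fin M) : edist (Real.ofDigits c) (Real.ofDigits c') ≤
      C * edist (G c) (G c') ^ (ρ : ℝ) := by
    by_cases hc : c = c'
    · simp [hc]
    have hex : ∃ k, c k ≠ c' k := Function.ne_iff.1 hc
    have hlt : ∀ i < Nat.find hex, c i = c' i := fun i hi => not_not.1 (Nat.find_min hex hi)
    have hle : dist (Real.ofDigits c) (Real.ofDigits c') ≤ C * dist (G c) (G c') ^ (ρ : ℝ) :=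
      (Real.abs_ofDigits_sub_ofDigits_le hlt).trans (h c c' _ (Nat.find_spec hex))
    rw [edist_dist, edist_dist, ENNReal.ofReal_rpow_of_nonneg dist_nonneg ρ.coe_nonneg,
      ← ENNReal.ofReal_coe_nnreal, ← ENNReal.ofReal_mul C.coe_nonneg]
    exact ENNReal.ofReal_le_ofReal hle
  have hle := hdim.trans (dimH_range_le_of_edist_le hρ hdist)
  rwa [ENNReal.le_div_iff_mul_le (by simp [hρ.ne']) (by simp), one_mul] at hle

lemma infinite_of_sub_le_count {F : ℕ → Prop} [DecidablePred F] {θ C : ℝ} (hθ : 0 < θ)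
    (h : ∀ j : ℕ, j * θ - C ≤ Nat.count F j) : {j | F j}.Infinite := by
  intro hfin
  obtain ⟨j, hj⟩ := exists_nat_gt ((C + hfin.toFinset.card) / θ)
  rw [div_lt_iff₀ hθ] at hj
  have : (Nat.count F j : ℝ) ≤ hfin.toFinset.card := by exact_mod_cast Nat.count_le_card hfin j
  linarith [h j]

lemma ofReal_mul_le_dimH_range_concatBlocks {p N M : ℕ} [NeZero N] (hp : 1 < p) {γ θ C : ℝ}
    (hγ : 0 < γ) (hθ : 0 < θ) (hM : (p : ℝ) ^ (N * γ) ≤ M) {F : ℕ → Prop} [DecidablePred F]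
    (hF : ∀ j : ℕ, j * θ - C ≤ Nat.count F j) {W : ℕ → Fin M → Fin N → Fin p}
    (hinj : ∀ j, F j → Function.Injective (W j)) (htop : ∀ j, F j → ∀ a b, W j a ⊤ = W j b ⊤)
    (hne : ∀ a : ℕ → Fin M, ∃ᶠ i in atTop, (concatBlocks (fun j => W j (a j)) i).val ≠ 0) :
    ENNReal.ofReal (θ * γ) ≤ dimH (range fun c : ℕ → Fin M =>
      Real.ofDigits (concatBlocks fun j => W j (c (Nat.count F j)))) := by
  have hp' : (1 : ℝ) < p := by exact_mod_cast hp
  have hN : (0 : ℝ) < N := by exact_mod_cast NeZero.pos N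
  have hM1 : 1 < M := by
    exact_mod_cast (Real.one_lt_rpow hp' (by positivity : 0 < N * γ)).trans_le hM
  have hinf := infinite_of_sub_le_count hθ hF
  let A : ℝ≥0 := ((p : ℝ) ^ (N * (θ * γ) + N * γ * C)).toNNReal
  have hA : (A : ℝ) = (p : ℝ) ^ (N * (θ * γ) + N * γ * C) := Real.coe_toNNReal _ (by positivity)
  have hρ : ((θ * γ).toNNReal : ℝ) = θ * γ := Real.coe_toNNReal _ (by positivity)
  refine le_dimH_range_of_inv_pow_le (C := A) hM1 (Real.toNNReal_pos.2 (by positivity))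
    fun c c' k hk => ?_
  set j := Nat.nth F k
  have hj : F j := Nat.nth_mem_of_infinite hinf k
  have hcount : Nat.count F j = k := Nat.count_nth_of_infinite hinf k
  have hsep := inv_pow_le_abs_ofDigits_concatBlocks_sub hp
    (hne fun j => c (Nat.count F j)) (hne fun j => c' (Nat.count F j))
    ((hinj j hj).ne (hcount ▸ hk)) (htop j hj _ _)
  have hkj : j * θ - C ≤ k := hcount ▸ hF j
  calc ((M : ℝ) ^ k)⁻¹
      ≤ (((p : ℝ) ^ (N * γ)) ^ k)⁻¹ := by gcongr
    _ = (p : ℝ) ^ (-(N * γ * k)) := by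
      rw [← Real.rpow_mul_natCast (by positivity), Real.rpow_neg (by positivity)]
    _ ≤ (p : ℝ) ^ (-(N * γ * (j * θ - C))) := by gcongr; exact hp'.le
    _ = A * (((p : ℝ) ^ ((j + 1) * N))⁻¹) ^ (θ * γ) := by
      rw [hA, ← Real.rpow_natCast, ← Real.rpow_neg (by positivity),
        ← Real.rpow_mul (by positivity), ← Real.rpow_add (by positivity)]
      congr 1
      push_cast
      ring
    _ ≤ _ := by
      rw [hρ]
      gcongr
      exact hsep

/-! ### Target means -/

/-- The union of the sparse runs `[2 ^ k, 2 ^ k + k)`. -/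
def sparseRuns : Set ℕ := ⋃ k, Ico (2 ^ k) (2 ^ k + k)

lemma log_two_pow_add {k q : ℕ} (hq : q ≤ k) : Nat.log 2 (2 ^ k + q) = k := by
  have hk : k < 2 ^ k := Nat.lt_two_pow_self
  rw [Nat.log_eq_iff (Or.inr ⟨by norm_num, by positivity⟩), pow_succ]
  omega

open scoped Classical in
lemma count_mem_sparseRuns_le (j : ℕ) :
    Nat.count (· ∈ sparseRuns) j ≤ (Nat.log 2 j + 1) ^ 2 := by
  have hsub : (Finset.range j).filter (· ∈ sparseRuns) ⊆
      (Finset.range (Nat.log 2 j + 1)).biUnion fun k => Finset.Ico (2 ^ k) (2 ^ k + k) := by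
    intro i hi
    obtain ⟨hij, hi⟩ := Finset.mem_filter.1 hi
    obtain ⟨k, hk⟩ := mem_iUnion.1 hi
    have hkj : k ≤ Nat.log 2 j :=
      Nat.le_log_of_pow_le one_lt_two (hk.1.trans (Finset.mem_range.1 hij).le)
    exact Finset.mem_biUnion.2 ⟨k, Finset.mem_range.2 (by omega), by simpa using hk⟩
  rw [Nat.count_eq_card_filter_range, sq]
  refine (Finset.card_le_card hsub).trans ?_
  simpa using Finset.card_biUnion_le_card_mul (Finset.range (Nat.log 2 j + 1))
    (fun k => Finset.Ico (2 ^ k) (2 ^ k + k)) (Nat.log 2 j + 1) fun k hk => by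
      simpa using (Finset.mem_range.1 hk).le

lemma eventually_log_two_add_one_sq_le {ε : ℝ} (hε : 0 < ε) :
    ∀ᶠ j : ℕ in atTop, ((Nat.log 2 j : ℝ) + 1) ^ 2 ≤ ε * j := by
  have hpow : ∀ᶠ k : ℕ in atTop, ((k : ℝ) + 1) ^ 2 ≤ ε * 2 ^ k := by
    have hlittle := isLittleO_pow_const_const_pow_of_one_lt (R := ℝ) 2 one_lt_two
    filter_upwards [(tendsto_add_atTop_nat 1).eventually (hlittle.def (half_pos hε))] with k hk
    rw [Real.norm_of_nonneg (by positivity), Real.norm_of_nonneg (by positivity), pow_succ (2 : ℝ)]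
      at hk
    push_cast at hk
    linarith
  obtain ⟨K, hK⟩ := eventually_atTop.1 hpow
  filter_upwards [eventually_ge_atTop (2 ^ K)] with j hj
  have hlog : (2 : ℝ) ^ Nat.log 2 j ≤ j := by
    exact_mod_cast Nat.pow_log_le_self 2 ((pow_pos two_pos K).trans_le hj).ne'
  calc ((Nat.log 2 j : ℝ) + 1) ^ 2
      ≤ ε * 2 ^ Nat.log 2 j := hK _ (Nat.le_log_of_pow_le one_lt_two hj)
    _ ≤ ε * j := by gcongr

open scoped Classical in
lemma exists_sub_le_count_notMem_sparseRuns {θ : ℝ} (hθ : θ < 1) :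
    ∃ C : ℝ, ∀ j : ℕ, j * θ - C ≤ Nat.count (· ∉ sparseRuns) j := by
  obtain ⟨J, hJ⟩ := eventually_atTop.1 (eventually_log_two_add_one_sq_le (sub_pos.2 hθ))
  refine ⟨J, fun j => ?_⟩
  rcases lt_or_ge j J with hj | hj
  · have : j * θ ≤ j * 1 := by gcongr
    have : (j : ℝ) ≤ J := by exact_mod_cast hj.le
    linarith [(Nat.count (· ∉ sparseRuns) j).cast_nonneg (α := ℝ)]
  · have hsplit : (Nat.count (· ∈ sparseRuns) j : ℝ) + Nat.count (· ∉ sparseRuns) j = j := by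
      rw [Nat.count_eq_card_filter_range, Nat.count_eq_card_filter_range]
      exact_mod_cast (Finset.card_filter_add_card_filter_not _).trans (Finset.card_range j)
    have hle : (Nat.count (· ∈ sparseRuns) j : ℝ) ≤ ((Nat.log 2 j : ℝ) + 1) ^ 2 := by
      exact_mod_cast count_mem_sparseRuns_le j
    linarith [hJ j hj, J.cast_nonneg (α := ℝ)]

open scoped Classical in
/-- The mean digit aimed at in the `i`-th block: `t`, except on the sparse runs, where it is `α` and
`β` alternately. -/
def targetMean (α β t : ℝ) (i : ℕ) : ℝ :=
  if i ∈ sparseRuns then if Even (Nat.log 2 i) then α else β else t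

lemma targetMean_of_notMem {α β t : ℝ} {i : ℕ} (hi : i ∉ sparseRuns) :
    targetMean α β t i = t := if_neg hi

lemma targetMean_two_pow_add {α β t : ℝ} {k q : ℕ} (hq : q < k) :
    targetMean α β t (2 ^ k + q) = if Even k then α else β := by
  have hmem : 2 ^ k + q ∈ sparseRuns := mem_iUnion.2 ⟨k, by simpa using hq⟩
  rw [targetMean, if_pos hmem, log_two_pow_add hq.le]

lemma targetMean_mem_Icc {α β t : ℝ} (ht : t ∈ Icc α β) (i : ℕ) :
    targetMean α β t i ∈ Icc α β := by
  have hαβ : α ≤ β := ht.1.trans ht.2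
  unfold targetMean
  split_ifs
  exacts [left_mem_Icc.2 hαβ, right_mem_Icc.2 hαβ, ht]

lemma frequently_forall_lt_div {P : ℕ → Prop} {N : ℕ} (hN : 0 < N) {n : ℕ}
    (h : ∃ᶠ m in atTop, ∀ i < n, P (m + i)) : ∃ᶠ m in atTop, ∀ i < n, P ((m + i) / N) := by
  refine (tendsto_id.const_mul_atTop' hN).frequently (h.mono fun m hm i hi => ?_)
  rw [id, Nat.mul_add_div hN]
  exact hm _ ((Nat.div_le_self i N).trans_lt hi)

lemma frequently_forall_lt_targetMean_eq_left (α β t : ℝ) (n : ℕ) :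
    ∃ᶠ m in atTop, ∀ i < n, targetMean α β t (m + i) = α := by
  refine frequently_atTop.2 fun K => ⟨2 ^ (2 * (K + n)), ?_, fun i hi => ?_⟩
  · have : 2 * (K + n) < 2 ^ (2 * (K + n)) := Nat.lt_two_pow_self
    omega
  · rw [targetMean_two_pow_add (by omega), if_pos (even_two_mul _)]

lemma frequently_forall_lt_targetMean_eq_right (α β t : ℝ) (n : ℕ) :
    ∃ᶠ m in atTop, ∀ i < n, targetMean α β t (m + i) = β := by
  refine frequently_atTop.2 fun K => ⟨2 ^ (2 * (K + n) + 1), ?_, fun i hi => ?_⟩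
  · have : 2 * (K + n) + 1 < 2 ^ (2 * (K + n) + 1) := Nat.lt_two_pow_self
    omega
  · rw [targetMean_two_pow_add (by omega), if_neg (Nat.not_even_two_mul_add_one _)]

/-! ### The lower bound -/

lemma exists_blocks_sum_eq_floorIncrement {p N M : ℕ} [NeZero N] (hp : 0 < p) {t : ℝ}
    (hU : ∀ q : ℕ, |(q : ℝ) - N * t| < 1 → ∃ U : Fin M → Fin N → Fin p,
      Function.Injective U ∧ (∀ a, ∑ i, (U a i : ℕ) = q) ∧ ∀ a b, U a ⊤ = U b ⊤)
    {τ : ℕ → ℝ} (hτ : ∀ j, τ j ∈ Icc (0 : ℝ) (p - 1)) :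
    ∃ W : ℕ → Fin M → Fin N → Fin p,
      (∀ j a, ∑ l, (W j a l : ℕ) = floorIncrement (fun j => N * τ j) j) ∧
      (∀ j, τ j = t → Function.Injective (W j)) ∧
      ∀ j, τ j = t → ∀ a b, W j a ⊤ = W j b ⊤ := by
  have hround := abs_floorIncrement_sub_lt fun j => mul_nonneg N.cast_nonneg (hτ j).1
  have hblock (j : ℕ) : ∃ V : Fin M → Fin N → Fin p,
      (∀ a, ∑ l, (V a l : ℕ) = floorIncrement (fun j => N * τ j) j) ∧
      (τ j = t → Function.Injective V) ∧ (τ j = t → ∀ a b, V a ⊤ = V b ⊤) := by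
    by_cases hj : τ j = t
    · obtain ⟨U, hinj, hsum, htop⟩ := hU _ (hj ▸ hround j)
      exact ⟨U, hsum, fun _ => hinj, fun _ => htop⟩
    · have hle : N * τ j ≤ N * (p - 1) := by gcongr; exact (hτ j).2
      have hlt : floorIncrement (fun j => N * τ j) j < N * (p - 1) + 1 := by
        have : (floorIncrement (fun j => N * τ j) j : ℝ) < (N * (p - 1) + 1 : ℕ) := by
          push_cast [Nat.cast_sub hp]
          linarith [(abs_lt.1 (hround j)).2]
        exact_mod_cast this
      obtain ⟨u, hu⟩ := exists_word_sum_eq hp (Nat.lt_succ_iff.1 hlt)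
      exact ⟨fun _ => u, fun _ => hu, fun h => absurd h hj, fun h => absurd h hj⟩
  choose W hsum hinj htop using hblock
  exact ⟨W, hsum, hinj, htop⟩

lemma ofReal_mul_le_dimH_BanachSet {p : ℕ} (hp : 1 < p) {α β t γ θ : ℝ} (hα : 0 ≤ α)
    (hβ : β ≤ p - 1) (ht : t ∈ Icc α β) (hγ : 0 < γ) (hγt : γ < entropy p t) (hθ : 0 < θ)
    (hθ1 : θ < 1) : ENNReal.ofReal (θ * γ) ≤ dimH (BanachSet p α β) := by
  classical
  have ht' := mem_Ioo_of_entropy_pos hp ⟨hα.trans ht.1, ht.2.trans hβ⟩ (hγ.trans hγt)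
  obtain ⟨N, _, M, hM, hU⟩ := exists_block_words hp ht' hγ hγt
  obtain ⟨C, hF⟩ := exists_sub_le_count_notMem_sparseRuns hθ1
  have hτ (j : ℕ) := targetMean_mem_Icc ht j
  obtain ⟨W, hsum, hinj, htop⟩ := exists_blocks_sum_eq_floorIncrement (by omega) hU
    (τ := targetMean α β t) fun j => ⟨hα.trans (hτ j).1, (hτ j).2.trans hβ⟩
  have hleft (n : ℕ) := frequently_forall_lt_div
    (P := fun i => targetMean α β t i = α) (NeZero.pos N)
    (frequently_forall_lt_targetMean_eq_left α β t n)
  have hright (n : ℕ) := frequently_forall_lt_div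
    (P := fun i => targetMean α β t i = β) (NeZero.pos N)
    (frequently_forall_lt_targetMean_eq_right α β t n)
  have hdiscrepancy (a : ℕ → Fin M) := abs_sum_concatBlocks_sub_le
    (fun j => ⟨hα.trans (hτ j).1, by linarith [(hτ j).2]⟩) fun j => hsum j (a j)
  have hne (a : ℕ → Fin M) : ∃ᶠ i in atTop, (concatBlocks (fun j => W j (a j)) i).val ≠ 0 :=
    frequently_ne_zero_of_abs_sum_sub_le (σ := fun i => targetMean α β t (i / N))
      (ht'.1.trans_le ht.2) hright (hdiscrepancy a)
  refine (ofReal_mul_le_dimH_range_concatBlocks hp hγ hθ hM hF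
    (fun j hj => hinj j (targetMean_of_notMem hj)) (fun j hj => htop j (targetMean_of_notMem hj))
    hne).trans (dimH_mono ?_)
  rintro _ ⟨c, rfl⟩
  exact ofDigits_mem_BanachSet (hne _) (fun i => hτ (i / N)) hleft hright (hdiscrepancy _)

lemma ofReal_entropy_le_dimH_BanachSet {p : ℕ} (hp : 1 < p) {α β t : ℝ} (hα : 0 ≤ α)
    (hβ : β ≤ p - 1) (ht : t ∈ Icc α β) :
    ENNReal.ofReal (entropy p t) ≤ dimH (BanachSet p α β) := by
  refine ENNReal.le_of_forall_nnreal_lt fun ρ hρ => ?_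
  rcases ρ.coe_nonneg.eq_or_lt' with hρ0 | hρ0
  · simp [NNReal.coe_eq_zero.1 hρ0]
  rw [← ENNReal.ofReal_coe_nnreal, ENNReal.ofReal_lt_ofReal_iff_of_nonneg hρ0.le] at hρ
  obtain ⟨γ, hργ, hγt⟩ := exists_between hρ
  have hγ : 0 < γ := hρ0.trans hργ
  have hle := ofReal_mul_le_dimH_BanachSet hp hα hβ ht hγ hγt (div_pos hρ0 hγ)
    ((div_lt_one hγ).2 hργ)
  rwa [div_mul_cancel₀ _ hγ.ne', ENNReal.ofReal_coe_nnreal] at hle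

/-- For an integer `p ≥ 2` and reals `0 ≤ α ≤ β ≤ p-1`, the Hausdorff
dimension of the Banach set `B(α,β)` equals `sup_{α ≤ t ≤ β} h(t)`. -/
theorem dimH_BanachSet (p : ℕ) (hp : 2 ≤ p) (α β : ℝ)
    (hα : 0 ≤ α) (hαβ : α ≤ β) (hβ : β ≤ (p : ℝ) - 1) :
    dimH (BanachSet p α β) = ENNReal.ofReal (⨆ t ∈ Icc α β, entropy p t) := by
  refine (dimH_BanachSet_le hp hαβ fun t ht => le_iSup_entropy p ht).antisymm ?_
  have htop : dimH (BanachSet p α β) ≠ ⊤ := Real.dimH_ne_top _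
  rw [ENNReal.ofReal_le_iff_le_toReal htop]
  exact Real.iSup_le (fun t => Real.iSup_le (fun ht => (ENNReal.ofReal_le_iff_le_toReal htop).1
    (ofReal_entropy_le_dimH_BanachSet hp hα hβ ht)) ENNReal.toReal_nonneg) ENNReal.toReal_nonneg
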